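/- arXiv:0710.2884 — 2 statements merged into one kernel-verified Lean document; each statement's English description precedes it below -/
import Mathlib

section
/- The space U_m is indivisible: for every partition of U_m into finitely many pieces, one piece contains an isometric copy of U_m. -/
/-!
Fix a finite colouring of a space `X` with the extension property: every Katětov function with
values at most `m` on a finite set is realised in `X`. Two players alternately extend a Katětov
function, in rounds numbered `r, r - 1, …, 1`. In round `s` the first player must keep all values at
least `s`, and the second all values at least `s - 1`. A set `Γ` is large at level `r` for the
initial function if the second player can force the final function to be realised in `Γ`. Largeness
is partition regular up to extending the function, so some colour class `Γ` is large at level `m`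
for some function with all values at least `m`.

A copy of a countable space `Y` is then built inside `Γ` one point at a time. For every point `y`
not yet placed, a Katětov function prescribing the distances from `y` is kept, for which `Γ` is
large at the level `max 1 (min m (distance from y to the placed points))`. These functions are kept
coherent: they differ by at most the sup distance of the profiles of the two points over the placed
points, and any two of them add up to at least the largest distance those profiles allow. Before a
point is placed, it joins the base, which can lower the levels. Since only finitely many profiles
occur, the levels drop one by one, a highest of those still to drop first, and each time all the
other functions are amalgamated with the refinement provided by largeness.
-/

theorem fold_min_eq_or_exists {β : Type*} (S : Finset β) (m : ℕ) (f : β → ℕ) :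
    S.fold min m f = m ∨ ∃ b ∈ S, S.fold min m f = f b := by
  obtain ⟨hm, hf⟩ := Finset.le_fold_min (S.fold min m f) |>.1 le_rfl
  refine (Finset.fold_min_le (S.fold min m f) |>.1 le_rfl).imp (le_antisymm hm) ?_
  rintro ⟨b, hb, h⟩
  exact ⟨b, hb, le_antisymm (hf b hb) h⟩

/-! ### Integral metric spaces -/

section NatDist

variable {m : ℕ} {X Y : Type*} [MetricSpace X] [MetricSpace Y]

/-- Nonzero distances lie in `{1, …, m}`. -/
def HasIntegralDist (m : ℕ) (X : Type*) [MetricSpace X] : Prop :=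
  ∀ x y : X, x ≠ y → ∃ k : ℕ, 1 ≤ k ∧ k ≤ m ∧ dist x y = k

/-- The distance as a natural number, meaningful in spaces satisfying `HasIntegralDist`. -/
noncomputable def natDist (x y : X) : ℕ := ⌊dist x y⌋₊

@[simp]
theorem natDist_self (x : X) : natDist x x = 0 := by simp [natDist]

theorem natDist_comm (x y : X) : natDist x y = natDist y x := by
  rw [natDist, natDist, dist_comm]

theorem natDist_eq_of_dist_eq {x y : X} {k : ℕ} (h : dist x y = k) : natDist x y = k := by
  rw [natDist, h, Nat.floor_natCast]

namespace HasIntegralDist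

theorem cast_natDist (hX : HasIntegralDist m X) (x y : X) : (natDist x y : ℝ) = dist x y := by
  obtain rfl | hxy := eq_or_ne x y
  · simp
  · obtain ⟨k, -, -, hk⟩ := hX x y hxy
    rw [natDist_eq_of_dist_eq hk, hk]

theorem natDist_le (hX : HasIntegralDist m X) (x y : X) : natDist x y ≤ m := by
  obtain rfl | hxy := eq_or_ne x y
  · simp
  · obtain ⟨k, -, hkm, hk⟩ := hX x y hxy
    rwa [natDist_eq_of_dist_eq hk]

theorem one_le_natDist (hX : HasIntegralDist m X) {x y : X} (hxy : x ≠ y) :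
    1 ≤ natDist x y := by
  obtain ⟨k, hk1, -, hk⟩ := hX x y hxy
  rwa [natDist_eq_of_dist_eq hk]

theorem natDist_triangle (hX : HasIntegralDist m X) (x y z : X) :
    natDist x z ≤ natDist x y + natDist y z := by
  have h := dist_triangle x y z
  rw [← hX.cast_natDist, ← hX.cast_natDist, ← hX.cast_natDist] at h
  exact_mod_cast h

theorem isometry_of_natDist_eq (hX : HasIntegralDist m X) (hY : HasIntegralDist m Y) {e : Y → X}
    (he : ∀ y z, natDist (e y) (e z) = natDist y z) : Isometry e :=
  Isometry.of_dist_eq fun y z => by rw [← hX.cast_natDist, he, hY.cast_natDist]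

end HasIntegralDist

end NatDist

/-! ### Katětov functions -/

section Katetov

variable {r s m : ℕ} {X : Type*} [MetricSpace X] {W : Finset X} {g : X → ℕ}

/-- Katětov functions on `W` with values in `[r, m]`: the distances to `W` of a point that may be
added to it, at distance at least `r`. Values outside `W` are irrelevant. -/
structure IsKatetov (r m : ℕ) (W : Finset X) (g : X → ℕ) : Prop where
  le_apply : ∀ ⦃a⦄, a ∈ W → r ≤ g a
  apply_le : ∀ ⦃a⦄, a ∈ W → g a ≤ m
  apply_le_add : ∀ ⦃a⦄, a ∈ W → ∀ ⦃b⦄, b ∈ W → g a ≤ g b + natDist a b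
  natDist_le_add : ∀ ⦃a⦄, a ∈ W → ∀ ⦃b⦄, b ∈ W → natDist a b ≤ g a + g b

theorem IsKatetov.mono (h : IsKatetov r m W g) (hs : s ≤ r) : IsKatetov s m W g :=
  { h with le_apply := fun _ ha => hs.trans (h.le_apply ha) }

theorem IsKatetov.notMem_of_eqOn (h : IsKatetov r m W g) (hr : 1 ≤ r) {p : X}
    (hp : Set.EqOn (natDist p) g W) : p ∉ W := fun hpW => by
  have := h.le_apply hpW
  rw [← hp hpW, natDist_self] at this
  omega

theorem isKatetov_empty (r m : ℕ) (g : X → ℕ) : IsKatetov r m ∅ g := by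
  constructor <;> simp

open Function in
theorem IsKatetov.update_insert [DecidableEq X] (h : IsKatetov r m W g) {p : X} (hp : p ∉ W)
    {k : ℕ} (hrk : r ≤ k) (hkm : k ≤ m) (hg : ∀ a ∈ W, g a ≤ natDist p a + k)
    (hk : ∀ a ∈ W, k ≤ g a + natDist p a) (hd : ∀ a ∈ W, natDist p a ≤ g a + k) :
    IsKatetov r m (insert p W) (update g p k) := by
  have hne : ∀ a ∈ W, update g p k a = g a := fun a ha =>
    update_of_ne (ne_of_mem_of_not_mem ha hp) _ _
  constructor
  · simpa +contextual [hrk, hne] using h.le_apply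
  · simpa +contextual [hkm, hne] using h.apply_le
  · simp +contextual only [Finset.forall_mem_insert, update_self, natDist_self, add_zero, le_rfl,
      hne, natDist_comm _ p, h.apply_le_add, implies_true, and_true, true_and]
    exact ⟨hk, fun a ha => by have := hg a ha; omega⟩
  · simp +contextual only [Finset.forall_mem_insert, update_self, natDist_self, zero_le,
      hne, natDist_comm _ p, h.natDist_le_add, implies_true, and_true, true_and]
    exact ⟨fun a ha => by have := hd a ha; omega, hd⟩

/-- `g'` on `W'` extends `g` on `W` and is a Katětov function with values in `[r, m]`. -/
structure KatetovExt (r m : ℕ) (W : Finset X) (g : X → ℕ) (W' : Finset X) (g' : X → ℕ) :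
    Prop where
  subset : W ⊆ W'
  eqOn : Set.EqOn g' g W
  katetov : IsKatetov r m W' g'

theorem IsKatetov.extRefl (h : IsKatetov r m W g) : KatetovExt r m W g W g :=
  ⟨subset_rfl, Set.eqOn_refl g W, h⟩

theorem KatetovExt.trans {W' W'' : Finset X} {g' g'' : X → ℕ} (h : KatetovExt s m W g W' g')
    (h' : KatetovExt r m W' g' W'' g'') : KatetovExt r m W g W'' g'' :=
  ⟨h.subset.trans h'.subset, (h'.eqOn.mono (Finset.coe_subset.2 h.subset)).trans h.eqOn, h'.katetov⟩

/-- Every Katětov function bounded by `m` on a finite set is realised by a point. -/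
def HasExtensionProperty (m : ℕ) (X : Type*) [MetricSpace X] : Prop :=
  ∀ (W : Finset X) (g : X → ℕ), IsKatetov 0 m W g → ∃ x, Set.EqOn (natDist x) g W

end Katetov

/-! ### Large sets -/

section Large

variable {r m : ℕ} {X : Type*} [MetricSpace X] {Γ Δ : Set X} {W W' : Finset X} {g g' : X → ℕ}

/-- Largeness of `Γ` at level `r` for the Katětov function `g` on `W`: at level `0` the function is
realised in `Γ`, and at level `r + 1` every extension with values at least `r + 1` can be extended
further, with values at least `r`, to a function for which `Γ` is large at level `r`. -/
def IsLarge (m : ℕ) (Γ : Set X) : ℕ → Finset X → (X → ℕ) → Prop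
  | 0, W, g => ∃ x ∈ Γ, Set.EqOn (natDist x) g W
  | r + 1, W, g => ∀ W' g', KatetovExt (r + 1) m W g W' g' →
      ∃ W'' g'', KatetovExt r m W' g' W'' g'' ∧ IsLarge m Γ r W'' g''

theorem IsLarge.of_ext (h : IsLarge m Γ r W g) (hr : 1 ≤ r) (hext : KatetovExt r m W g W' g') :
    IsLarge m Γ r W' g' := by
  obtain ⟨r, rfl⟩ := Nat.exists_eq_add_of_le' hr
  exact fun W'' g'' h' => h W'' g'' (hext.trans h')

theorem IsLarge.exists_realization (h : IsLarge m Γ r W g) (hg : IsKatetov r m W g) :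
    ∃ x ∈ Γ, Set.EqOn (natDist x) g W := by
  induction r generalizing W g with
  | zero => exact h
  | succ r ih =>
    obtain ⟨W', g', hext, hlarge⟩ := h W g hg.extRefl
    obtain ⟨x, hxΓ, hx⟩ := ih hlarge hext.katetov
    exact ⟨x, hxΓ, (hx.mono (Finset.coe_subset.2 hext.subset)).trans hext.eqOn⟩

theorem HasExtensionProperty.isLarge_univ (hX : HasExtensionProperty m X) (hg : IsKatetov r m W g) :
    IsLarge m Set.univ r W g := by
  induction r generalizing W g with
  | zero =>
    obtain ⟨x, hx⟩ := hX W g hg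
    exact ⟨x, trivial, hx⟩
  | succ r ih =>
    intro W' g' hext
    have hg' : IsKatetov r m W' g' := hext.katetov.mono r.le_succ
    exact ⟨W', g', hg'.extRefl, ih hg'⟩

theorem IsLarge.exists_ext_of_union (h : IsLarge m (Γ ∪ Δ) r W g) (hg : IsKatetov r m W g) :
    ∃ W' g', KatetovExt r m W g W' g' ∧ (IsLarge m Γ r W' g' ∨ IsLarge m Δ r W' g') := by
  induction r generalizing W g with
  | zero =>
    obtain ⟨x, hxΓΔ, hx⟩ := h
    exact ⟨W, g, hg.extRefl, hxΓΔ.imp (⟨x, ·, hx⟩) (⟨x, ·, hx⟩)⟩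
  | succ r ih =>
    by_cases hΓ : IsLarge m Γ (r + 1) W g
    · exact ⟨W, g, hg.extRefl, Or.inl hΓ⟩
    obtain ⟨W₁, g₁, h₁, hnot⟩ : ∃ W₁ g₁, KatetovExt (r + 1) m W g W₁ g₁ ∧
        ∀ W' g', KatetovExt r m W₁ g₁ W' g' → ¬ IsLarge m Γ r W' g' := by
      simpa only [IsLarge, not_forall, not_exists, not_and, exists_prop] using hΓ
    refine ⟨W₁, g₁, h₁, Or.inr fun W₂ g₂ h₂ => ?_⟩
    obtain ⟨W₃, g₃, h₃, hlarge₃⟩ := h W₂ g₂ (h₁.trans h₂)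
    obtain ⟨W₄, g₄, h₄, hlarge₄⟩ := ih hlarge₃ h₃.katetov
    exact ⟨W₄, g₄, h₃.trans h₄,
      hlarge₄.resolve_left (hnot W₄ g₄ (h₂.trans (h₃.trans h₄)))⟩

theorem IsLarge.exists_ext_of_coloring {κ : Type*} {c : X → κ} {s : Finset κ}
    (h : IsLarge m (c ⁻¹' s) r W g) (hg : IsKatetov r m W g) :
    ∃ i ∈ s, ∃ W' g', KatetovExt r m W g W' g' ∧ IsLarge m (c ⁻¹' {i}) r W' g' := by
  classical
  induction s using Finset.induction_on generalizing W g with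
  | empty =>
    obtain ⟨x, hx, -⟩ := h.exists_realization hg
    simp at hx
  | insert i s _ ih =>
    rw [Finset.coe_insert, Set.insert_eq, Set.preimage_union] at h
    obtain ⟨W₁, g₁, h₁, hi | hs⟩ := h.exists_ext_of_union hg
    · exact ⟨i, Finset.mem_insert_self i s, W₁, g₁, h₁, hi⟩
    · obtain ⟨j, hj, W₂, g₂, h₂, hlarge⟩ := ih hs h₁.katetov
      exact ⟨j, Finset.mem_insert_of_mem hj, W₂, g₂, h₁.trans h₂, hlarge⟩

end Large

/-! ### Amalgamation of Katětov functions -/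

section Amalgam

variable {r s m N N₁ N₂ : ℕ} {X : Type*} [MetricSpace X] {W W' : Finset X} {q g g₁ g₂ : X → ℕ}

/-- The largest function bounded by `m` that is at most `q + N` and is dominated by every
one-Lipschitz extension bound `g a + dist a z` coming from `a ∈ W`. It extends `g` while staying
within `N` of `q`. -/
noncomputable def amalgam (m : ℕ) (W : Finset X) (q : X → ℕ) (N : ℕ) (g : X → ℕ) (z : X) : ℕ :=
  W.fold min (min m (q z + N)) fun a => g a + natDist a z

theorem le_amalgam_iff {z : X} {v : ℕ} : v ≤ amalgam m W q N g z ↔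
    (v ≤ m ∧ v ≤ q z + N) ∧ ∀ a ∈ W, v ≤ g a + natDist a z := by
  rw [amalgam, Finset.le_fold_min, le_min_iff]

theorem amalgam_le (z : X) : amalgam m W q N g z ≤ m := (le_amalgam_iff.1 le_rfl).1.1

theorem amalgam_le_add (z : X) : amalgam m W q N g z ≤ q z + N := (le_amalgam_iff.1 le_rfl).1.2

theorem amalgam_le_add_natDist {a : X} (ha : a ∈ W) (z : X) :
    amalgam m W q N g z ≤ g a + natDist a z := (le_amalgam_iff.1 le_rfl).2 a ha

theorem amalgam_cases (m : ℕ) (W : Finset X) (q : X → ℕ) (N : ℕ) (g : X → ℕ) (z : X) :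
    amalgam m W q N g z = m ∨ amalgam m W q N g z = q z + N ∨
      ∃ a ∈ W, amalgam m W q N g z = g a + natDist a z := by
  obtain h | h := fold_min_eq_or_exists W (min m (q z + N)) fun a => g a + natDist a z
  · exact (min_choice m (q z + N)).imp h.trans fun h' => Or.inl (h.trans h')
  · exact Or.inr (Or.inr h)

theorem amalgam_eqOn (hg : IsKatetov r m W g) (hgq : ∀ a ∈ W, g a ≤ q a + N) :
    Set.EqOn (amalgam m W q N g) g W := fun z hz => by
  refine le_antisymm (by simpa using amalgam_le_add_natDist hz z) (le_amalgam_iff.2 ?_)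
  refine ⟨⟨hg.apply_le hz, hgq z hz⟩, fun a ha => ?_⟩
  rw [natDist_comm]
  exact hg.apply_le_add hz ha

theorem amalgam_zero_eqOn (h : KatetovExt r m W g W' q) :
    Set.EqOn (amalgam m W q 0 g) q W' := fun z hz => by
  refine le_antisymm (amalgam_le_add z) (le_amalgam_iff.2 ?_)
  refine ⟨⟨h.katetov.apply_le hz, le_rfl⟩, fun a ha => ?_⟩
  rw [natDist_comm, ← h.eqOn ha]
  exact h.katetov.apply_le_add hz (h.subset ha)

theorem amalgam_le_amalgam_add {D : ℕ} (hg : ∀ a ∈ W, g₁ a ≤ g₂ a + D) (hN : N₁ ≤ N₂ + D)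
    (z : X) : amalgam m W q N₁ g₁ z ≤ amalgam m W q N₂ g₂ z + D := by
  obtain h | h | ⟨a, ha, h⟩ := amalgam_cases m W q N₂ g₂ z
  · have := amalgam_le (m := m) (W := W) (q := q) (N := N₁) (g := g₁) z
    omega
  · have := amalgam_le_add (m := m) (W := W) (q := q) (N := N₁) (g := g₁) z
    omega
  · have h₁ := amalgam_le_add_natDist (m := m) (q := q) (N := N₁) (g := g₁) ha z
    have h₂ := hg a ha
    omega

theorem le_amalgam_add_amalgam (hX : HasIntegralDist m X) {E : ℕ} {z : X} (hWW' : W ⊆ W')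
    (hz : z ∈ W') (hq : IsKatetov r m W' q) (hg₂ : IsKatetov s m W g₂)
    (hqg₁ : ∀ a ∈ W, g₁ a ≤ q a + N₁) (hqg₂ : ∀ a ∈ W, g₂ a ≤ q a + N₂)
    (hE : E ≤ m) (hEN : E ≤ 2 * q z + N₁ + N₂) (hEg : ∀ a ∈ W, E ≤ g₁ a + g₂ a) :
    E ≤ amalgam m W q N₁ g₁ z + amalgam m W q N₂ g₂ z := by
  obtain h₁ | h₁ | ⟨a, ha, h₁⟩ := amalgam_cases m W q N₁ g₁ z
  · omega
  · obtain h₂ | h₂ | ⟨b, hb, h₂⟩ := amalgam_cases m W q N₂ g₂ z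
    · omega
    · omega
    · have := hq.apply_le_add (hWW' hb) hz
      have := hqg₁ b hb
      have := hEg b hb
      omega
  · obtain h₂ | h₂ | ⟨b, hb, h₂⟩ := amalgam_cases m W q N₂ g₂ z
    · omega
    · have := hq.apply_le_add (hWW' ha) hz
      have := hqg₂ a ha
      have := hEg a ha
      omega
    · have := hg₂.apply_le_add ha hb
      have := hX.natDist_triangle a z b
      have := natDist_comm z b
      have := hEg a ha
      omega

theorem natDist_le_amalgam_add_amalgam (hX : HasIntegralDist m X) {a b : X} (hWW' : W ⊆ W')
    (ha : a ∈ W') (hb : b ∈ W') (hq : IsKatetov r m W' q) (hg : IsKatetov s m W g)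
    (hqg : ∀ a ∈ W, q a ≤ g a + N) :
    natDist a b ≤ amalgam m W q N g a + amalgam m W q N g b := by
  have hab := hX.natDist_le a b
  obtain h₁ | h₁ | ⟨c, hc, h₁⟩ := amalgam_cases m W q N g a
  · omega
  · obtain h₂ | h₂ | ⟨c, hc, h₂⟩ := amalgam_cases m W q N g b
    · omega
    · have := hq.natDist_le_add ha hb
      omega
    · have := hq.natDist_le_add ha (hWW' hc)
      have := hqg c hc
      have := hX.natDist_triangle a c b
      omega
  · have := natDist_comm a c
    obtain h₂ | h₂ | ⟨c', hc', h₂⟩ := amalgam_cases m W q N g b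
    · omega
    · have := hq.natDist_le_add (hWW' hc) hb
      have := hqg c hc
      have := hX.natDist_triangle a c b
      omega
    · have := hg.natDist_le_add hc hc'
      have := hX.natDist_triangle a c b
      have := hX.natDist_triangle c c' b
      omega

theorem isKatetov_amalgam (hX : HasIntegralDist m X) {t : ℕ} (hWW' : W ⊆ W')
    (hq : IsKatetov r m W' q) (hg : IsKatetov s m W g) (hqg : ∀ a ∈ W, q a ≤ g a + N)
    (htm : t ≤ m) (htr : t ≤ r + N) (hts : t ≤ s) :
    IsKatetov t m W' (amalgam m W q N g) where
  le_apply z hz := le_amalgam_iff.2 ⟨⟨htm, htr.trans (Nat.add_le_add_right (hq.le_apply hz) N)⟩,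
    fun a ha => (hts.trans (hg.le_apply ha)).trans (Nat.le_add_right _ _)⟩
  apply_le z _ := amalgam_le z
  apply_le_add a ha b hb := by
    obtain h | h | ⟨c, hc, h⟩ := amalgam_cases m W q N g b
    · have := amalgam_le (m := m) (W := W) (q := q) (N := N) (g := g) a
      omega
    · have := amalgam_le_add (m := m) (W := W) (q := q) (N := N) (g := g) a
      have := hq.apply_le_add ha hb
      omega
    · have := amalgam_le_add_natDist (m := m) (q := q) (N := N) (g := g) hc a
      have := hX.natDist_triangle c b a
      have := natDist_comm a b
      omega
  natDist_le_add a ha b hb := natDist_le_amalgam_add_amalgam hX hWW' ha hb hq hg hqg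

end Amalgam

/-! ### Profiles -/

section Profile

variable {m : ℕ} {β : Type*} {S S' : Finset β}

/-- The sup distance over `S`. Functions `β → ℕ` are seen as profiles: the distances from a point
to the points of a finite set `S`. -/
def profileDist (S : Finset β) (σ τ : β → ℕ) : ℕ := S.sup fun b => Nat.dist (σ b) (τ b)

/-- The largest distance, up to `m`, allowed by the triangle inequality between points with profiles
`σ` and `τ` over `S`. -/
def profileSum (m : ℕ) (S : Finset β) (σ τ : β → ℕ) : ℕ := S.fold min m fun b => σ b + τ b

/-- The level of largeness required of the Katětov function of a point with profile `σ` over `S`: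
its distance to `S`, up to `m`, or `1` if this distance is `0`. -/
def profileLevel (m : ℕ) (S : Finset β) (σ : β → ℕ) : ℕ := max 1 (S.fold min m σ)

theorem profileDist_le_iff {σ τ : β → ℕ} {N : ℕ} :
    profileDist S σ τ ≤ N ↔ ∀ b ∈ S, σ b ≤ τ b + N ∧ τ b ≤ σ b + N := by
  rw [profileDist, Finset.sup_le_iff]
  refine forall₂_congr fun b _ => ?_
  rw [Nat.dist]
  omega

theorem apply_le_add_profileDist {b : β} (hb : b ∈ S) (σ τ : β → ℕ) :
    σ b ≤ τ b + profileDist S σ τ :=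
  (profileDist_le_iff.1 le_rfl b hb).1

theorem profileDist_self (S : Finset β) (σ : β → ℕ) : profileDist S σ σ = 0 :=
  Nat.le_zero.1 (profileDist_le_iff.2 fun _ _ => by simp)

theorem profileDist_comm (S : Finset β) (σ τ : β → ℕ) : profileDist S σ τ = profileDist S τ σ := by
  simp only [profileDist, Nat.dist_comm]

theorem profileDist_triangle (S : Finset β) (σ τ ρ : β → ℕ) :
    profileDist S σ ρ ≤ profileDist S σ τ + profileDist S τ ρ := by
  refine Finset.sup_le fun b hb => (Nat.dist.triangle_inequality _ (τ b) _).trans ?_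
  exact Nat.add_le_add (Finset.le_sup (f := fun b => Nat.dist (σ b) (τ b)) hb)
    (Finset.le_sup (f := fun b => Nat.dist (τ b) (ρ b)) hb)

theorem profileDist_pos {σ τ : β → ℕ} {b : β} (hb : b ∈ S) (h : σ b ≠ τ b) :
    0 < profileDist S σ τ :=
  (Nat.dist_pos_of_ne h).trans_le (Finset.le_sup (f := fun b => Nat.dist (σ b) (τ b)) hb)

theorem profileDist_mono (hS : S ⊆ S') (σ τ : β → ℕ) : profileDist S σ τ ≤ profileDist S' σ τ :=
  Finset.sup_mono hS

theorem profileSum_le (m : ℕ) (S : Finset β) (σ τ : β → ℕ) : profileSum m S σ τ ≤ m :=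
  (Finset.le_fold_min _ |>.1 le_rfl).1

theorem profileSum_le_add {b : β} (hb : b ∈ S) (σ τ : β → ℕ) : profileSum m S σ τ ≤ σ b + τ b :=
  (Finset.le_fold_min _ |>.1 le_rfl).2 b hb

theorem profileSum_anti (hS : S ⊆ S') (σ τ : β → ℕ) :
    profileSum m S' σ τ ≤ profileSum m S σ τ :=
  Finset.le_fold_min _ |>.2 ⟨profileSum_le _ _ _ _, fun _ hb => profileSum_le_add (hS hb) _ _⟩

theorem profileDist_congr {σ σ' τ τ' : β → ℕ} (hσ : Set.EqOn σ σ' S) (hτ : Set.EqOn τ τ' S) :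
    profileDist S σ τ = profileDist S σ' τ' :=
  Finset.sup_congr rfl fun b hb => by rw [hσ hb, hτ hb]

theorem profileSum_congr {σ σ' τ τ' : β → ℕ} (hσ : Set.EqOn σ σ' S) (hτ : Set.EqOn τ τ' S) :
    profileSum m S σ τ = profileSum m S σ' τ' :=
  Finset.fold_congr fun b hb => by rw [hσ hb, hτ hb]

theorem profileLevel_congr {σ σ' : β → ℕ} (hσ : Set.EqOn σ σ' S) :
    profileLevel m S σ = profileLevel m S σ' := by
  rw [profileLevel, profileLevel, Finset.fold_congr hσ]

theorem one_le_profileLevel (m : ℕ) (S : Finset β) (σ : β → ℕ) : 1 ≤ profileLevel m S σ :=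
  le_max_left _ _

theorem profileLevel_le_max (σ : β → ℕ) {b : β} (hb : b ∈ S) :
    profileLevel m S σ ≤ max 1 (σ b) :=
  max_le_max_left 1 ((Finset.le_fold_min _ |>.1 le_rfl).2 b hb)

theorem profileLevel_anti (hS : S ⊆ S') (σ : β → ℕ) :
    profileLevel m S' σ ≤ profileLevel m S σ := by
  obtain ⟨hm, hσ⟩ := Finset.le_fold_min (S'.fold min m σ) |>.1 le_rfl
  exact max_le_max_left 1 (Finset.le_fold_min _ |>.2 ⟨hm, fun b hb => hσ b (hS hb)⟩)

theorem profileLevel_empty (hm : 1 ≤ m) (σ : β → ℕ) : profileLevel m ∅ σ = m := by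
  rw [profileLevel, Finset.fold_empty, max_eq_right hm]

theorem profileLevel_le_add_profileDist (m : ℕ) (S : Finset β) (σ τ : β → ℕ) :
    profileLevel m S τ ≤ profileLevel m S σ + profileDist S σ τ := by
  refine max_le ((one_le_profileLevel m S σ).trans (Nat.le_add_right _ _)) ?_
  refine le_trans ?_ (Nat.add_le_add_right (le_max_right 1 _) _)
  obtain ⟨hτm, hτ⟩ := Finset.le_fold_min (S.fold min m τ) |>.1 le_rfl
  obtain h | ⟨b, hb, h⟩ := fold_min_eq_or_exists S m σ
  · exact hτm.trans (h.ge.trans (Nat.le_add_right _ _))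
  · rw [h, profileDist_comm]
    exact (hτ b hb).trans (apply_le_add_profileDist hb τ σ)

theorem profileSum_le_profileLevel_add (m : ℕ) (S : Finset β) (σ τ ρ : β → ℕ) :
    profileSum m S τ ρ ≤ 2 * profileLevel m S σ + profileDist S σ τ + profileDist S σ ρ := by
  have hσ : S.fold min m σ ≤ profileLevel m S σ := le_max_right _ _
  obtain h | ⟨b, hb, h⟩ := fold_min_eq_or_exists S m σ
  · have := profileSum_le m S τ ρ
    omega
  · have := profileSum_le_add (m := m) hb τ ρ
    have := (profileDist_le_iff (σ := σ) (τ := τ)).1 le_rfl b hb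
    have := (profileDist_le_iff (σ := σ) (τ := ρ)).1 le_rfl b hb
    omega

end Profile

/-! ### Coherent families of Katětov functions -/

section CoherentFamily

variable {m : ℕ} {X ι ι' β : Type*} [MetricSpace X] {Γ : Set X} {S S' : Finset β}
  {σ : ι → β → ℕ} {W W' : Finset X} {q : X → ℕ} {g : ι → X → ℕ} {lev : ι → ℕ}

/-- A family of Katětov functions `g i` on `W`, one for each profile `σ i` over `S`, for which `Γ`
is large at level `lev i`. Coherence asks that the distances allowed by the profiles over `S` remain
allowed by the functions over `W`. -/
structure IsCoherentFamily (m : ℕ) (Γ : Set X) (S : Finset β) (σ : ι → β → ℕ) (W : Finset X)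
    (g : ι → X → ℕ) (lev : ι → ℕ) : Prop where
  one_le_level : ∀ i, 1 ≤ lev i
  level_le : ∀ i, lev i ≤ m
  katetov : ∀ i, IsKatetov (lev i) m W (g i)
  le_add_profileDist : ∀ i j, ∀ a ∈ W, g i a ≤ g j a + profileDist S (σ i) (σ j)
  profileSum_le_apply_add : ∀ i j, ∀ a ∈ W, profileSum m S (σ i) (σ j) ≤ g i a + g j a
  large : ∀ i, IsLarge m Γ (lev i) W (g i)

namespace IsCoherentFamily

theorem comap (h : IsCoherentFamily m Γ S σ W g lev) (f : ι' → ι) {σ' : ι' → β → ℕ}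
    (hdist : ∀ i j, profileDist S (σ (f i)) (σ (f j)) ≤ profileDist S' (σ' i) (σ' j))
    (hsum : ∀ i j, profileSum m S' (σ' i) (σ' j) ≤ profileSum m S (σ (f i)) (σ (f j))) :
    IsCoherentFamily m Γ S' σ' W (g ∘ f) (lev ∘ f) where
  one_le_level i := h.one_le_level (f i)
  level_le i := h.level_le (f i)
  katetov i := h.katetov (f i)
  le_add_profileDist i j a ha := (h.le_add_profileDist (f i) (f j) a ha).trans
    (Nat.add_le_add_left (hdist i j) _)
  profileSum_le_apply_add i j a ha := (hsum i j).trans (h.profileSum_le_apply_add (f i) (f j) a ha)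
  large i := h.large (f i)

theorem eqOn_of_profile_eqOn (h : IsCoherentFamily m Γ S σ W g lev) {i j : ι}
    (hij : Set.EqOn (σ i) (σ j) S) : Set.EqOn (g i) (g j) W := fun a ha => by
  have hi := h.le_add_profileDist i j a ha
  have hj := h.le_add_profileDist j i a ha
  rw [profileDist_congr hij (Set.eqOn_refl _ _), profileDist_self] at hi
  rw [profileDist_congr (Set.eqOn_refl _ _) hij, profileDist_self] at hj
  exact le_antisymm hi hj

theorem le_add_of_eqOn (h : IsCoherentFamily m Γ S σ W g lev) {i : ι} (hq : Set.EqOn q (g i) W)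
    (j : ι) : ∀ a ∈ W, q a ≤ g j a + profileDist S (σ i) (σ j) := fun a ha =>
  (hq ha).trans_le (h.le_add_profileDist i j a ha)

theorem apply_le_add_of_eqOn (h : IsCoherentFamily m Γ S σ W g lev) {i : ι}
    (hq : Set.EqOn q (g i) W) (j : ι) : ∀ a ∈ W, g j a ≤ q a + profileDist S (σ i) (σ j) :=
  fun a ha => by
    rw [hq ha, profileDist_comm]
    exact h.le_add_profileDist j i a ha

theorem katetovExt_amalgam (hX : HasIntegralDist m X) (h : IsCoherentFamily m Γ S σ W g lev)
    {i j : ι} {s t : ℕ} (hq : KatetovExt s m W (g i) W' q) (ht : t ≤ lev j)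
    (hts : t ≤ s + profileDist S (σ i) (σ j)) :
    KatetovExt t m W (g j) W' (amalgam m W q (profileDist S (σ i) (σ j)) (g j)) where
  subset := hq.subset
  eqOn := amalgam_eqOn (h.katetov j) (h.apply_le_add_of_eqOn hq.eqOn j)
  katetov := isKatetov_amalgam hX hq.subset hq.katetov (h.katetov j) (h.le_add_of_eqOn hq.eqOn j)
    (ht.trans (h.level_le j)) hts ht

theorem amalgam_of_large (hX : HasIntegralDist m X) (h : IsCoherentFamily m Γ S σ W g lev)
    {i : ι} {s : ℕ} (hq : KatetovExt s m W (g i) W' q) (hs : profileLevel m S (σ i) ≤ s)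
    {lev' : ι → ℕ} (hpos : ∀ j, 1 ≤ lev' j) (hle : ∀ j, lev' j ≤ lev j)
    (hlev : ∀ j, lev' j ≤ s + profileDist S (σ i) (σ j))
    (hlarge : ∀ j, IsLarge m Γ (lev' j) W' (amalgam m W q (profileDist S (σ i) (σ j)) (g j))) :
    IsCoherentFamily m Γ S σ W' (fun j => amalgam m W q (profileDist S (σ i) (σ j)) (g j))
      lev' where
  one_le_level := hpos
  level_le j := (hle j).trans (h.level_le j)
  katetov j := (h.katetovExt_amalgam hX hq (hle j) (hlev j)).katetov
  le_add_profileDist j l a _ := by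
    refine amalgam_le_amalgam_add (h.le_add_profileDist j l) ?_ a
    rw [profileDist_comm S (σ j)]
    exact profileDist_triangle S _ _ _
  profileSum_le_apply_add j l a ha := by
    refine le_amalgam_add_amalgam hX hq.subset ha hq.katetov (h.katetov l)
      (h.apply_le_add_of_eqOn hq.eqOn j) (h.apply_le_add_of_eqOn hq.eqOn l)
      (profileSum_le m S _ _) ?_ (h.profileSum_le_apply_add j l)
    have := profileSum_le_profileLevel_add m S (σ i) (σ j) (σ l)
    have := hq.katetov.le_apply ha
    omega
  large := hlarge

open Function in
/-- Largeness yields a refinement `q` of `g i`, and the other functions are amalgamated with `q`. -/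
theorem exists_update [DecidableEq ι] (hX : HasIntegralDist m X)
    (h : IsCoherentFamily m Γ S σ W g lev) {i : ι} {s : ℕ} (hi : lev i = s + 1)
    (hs : profileLevel m S (σ i) ≤ s)
    (hlev : ∀ j, j ≠ i → lev j ≤ s + profileDist S (σ i) (σ j)) :
    ∃ W' g', W ⊆ W' ∧ (∀ j, Set.EqOn (g' j) (g j) W) ∧
      IsCoherentFamily m Γ S σ W' g' (update lev i s) := by
  have hi_katetov := h.katetov i
  have hi_large := h.large i
  rw [hi] at hi_katetov hi_large
  obtain ⟨W', q, hq, hq_large⟩ := hi_large W (g i) hi_katetov.extRefl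
  have hpos : ∀ j, 1 ≤ update lev i s j := forall_update_iff lev (p := fun _ t => 1 ≤ t) |>.2
    ⟨(one_le_profileLevel m S _).trans hs, fun j _ => h.one_le_level j⟩
  have hle : ∀ j, update lev i s j ≤ lev j := update_le_self_iff.2 (by omega)
  have hlev' : ∀ j, update lev i s j ≤ s + profileDist S (σ i) (σ j) :=
    forall_update_iff lev (p := fun j t => t ≤ s + profileDist S (σ i) (σ j)) |>.2
      ⟨Nat.le_add_right _ _, hlev⟩
  have hext := fun j => h.katetovExt_amalgam hX hq (hle j) (hlev' j)
  refine ⟨W', _, hq.subset, fun j => (hext j).eqOn,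
    h.amalgam_of_large hX hq hs hpos hle hlev' fun j => ?_⟩
  obtain rfl | hj := eq_or_ne j i
  · have hqj : Set.EqOn (amalgam m W q (profileDist S (σ j) (σ j)) (g j)) q W' := by
      rw [profileDist_self]
      exact amalgam_zero_eqOn hq
    have hkat := (hext j).katetov
    rw [update_self] at hkat ⊢
    exact hq_large.of_ext ((one_le_profileLevel m S _).trans hs) ⟨subset_rfl, hqj, hkat⟩
  · have hextj := hext j
    rw [update_of_ne hj] at hextj ⊢
    exact (h.large j).of_ext (h.one_le_level j) hextj

open Function in
theorem exists_lower_of_finite [Finite ι] (hX : HasIntegralDist m X)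
    (h : IsCoherentFamily m Γ S σ W g lev)
    (hsep : ∀ i j, i ≠ j → 0 < profileDist S (σ i) (σ j))
    (hle : ∀ i, profileLevel m S (σ i) ≤ lev i) :
    ∃ W' g', W ⊆ W' ∧ (∀ i, Set.EqOn (g' i) (g i) W) ∧
      IsCoherentFamily m Γ S σ W' g' fun i => profileLevel m S (σ i) := by
  classical
  have := Fintype.ofFinite ι
  let t : ι → ℕ := fun i => profileLevel m S (σ i)
  induction hN : ∑ i, lev i using Nat.strong_induction_on generalizing W g lev with
  | _ N ih =>
  obtain heq | hne := (Finset.univ.filter fun i => t i < lev i).eq_empty_or_nonempty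
  · have hlev : lev = t := funext fun i =>
      le_antisymm (by simpa using Finset.filter_eq_empty_iff.1 heq (Finset.mem_univ i)) (hle i)
    exact ⟨W, g, subset_rfl, fun i => Set.eqOn_refl _ _, by rwa [hlev] at h⟩
  obtain ⟨i, hi, hmax⟩ := Finset.exists_max_image _ lev hne
  simp only [Finset.mem_filter, Finset.mem_univ, true_and] at hi hmax
  obtain ⟨s, hs⟩ : ∃ s, lev i = s + 1 := Nat.exists_eq_add_of_le' (h.one_le_level i)
  have hts : t i ≤ s := by omega
  obtain ⟨W₁, g₁, hW₁, hg₁, h₁⟩ := h.exists_update hX hs hts fun j hj => by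
    have hpos := hsep i j hj.symm
    obtain hjt | hjt := lt_or_ge (t j) (lev j)
    · have := hmax j hjt
      omega
    · have : t j ≤ t i + _ := profileLevel_le_add_profileDist m S (σ i) (σ j)
      omega
  have hle₁ : t ≤ update lev i s := le_update_iff.2 ⟨hts, fun j _ => hle j⟩
  have hlt : ∑ j, update lev i s j < N := by
    rw [← hN]
    exact Fintype.sum_strictMono (update_lt_self_iff.2 (by omega))
  obtain ⟨W₂, g₂, hW₂, hg₂, h₂⟩ := ih _ hlt h₁ hle₁ rfl
  exact ⟨W₂, g₂, hW₁.trans hW₂,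
    fun j => ((hg₂ j).mono (Finset.coe_subset.2 hW₁)).trans (hg₁ j), h₂⟩

/-- Enlarging the base lowers the levels. Only finitely many profiles occur over the new base, so it
suffices to treat one representative of each. -/
theorem exists_refine (hX : HasIntegralDist m X)
    (h : IsCoherentFamily m Γ S σ W g fun i => profileLevel m S (σ i))
    (hσ : ∀ i b, σ i b ≤ m) (hS : S ⊆ S') :
    ∃ W' g', W ⊆ W' ∧ (∀ i, Set.EqOn (g' i) (g i) W) ∧
      IsCoherentFamily m Γ S' σ W' g' fun i => profileLevel m S' (σ i) := by
  let profile : ι → S' → ℕ := fun i => S'.restrict (σ i)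
  have : Finite (Set.range profile) :=
    (Set.Finite.pi' fun _ : S' => Set.finite_Iic m).subset <| by
      rintro _ ⟨i, rfl⟩ b
      exact hσ i b
  let rep : Set.range profile → ι := Set.rangeSplitting profile
  let cls : ι → Set.range profile := Set.rangeFactorization profile
  have hrep : ∀ i, Set.EqOn (σ i) (σ (rep (cls i))) S' := fun i b hb =>
    (congrFun (Set.apply_rangeSplitting profile (cls i)) ⟨b, hb⟩).symm
  have hsep : ∀ c d, c ≠ d → 0 < profileDist S' (σ (rep c)) (σ (rep d)) := fun c d hcd => by
    have hprofile : profile (rep c) ≠ profile (rep d) := by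
      rw [Set.apply_rangeSplitting profile c, Set.apply_rangeSplitting profile d]
      exact Subtype.coe_ne_coe.2 hcd
    obtain ⟨b, hb⟩ := Function.ne_iff.1 hprofile
    exact profileDist_pos b.2 hb
  obtain ⟨W', g', hWW', hg', h'⟩ :=
    (h.comap (S' := S') rep (fun _ _ => profileDist_mono hS _ _)
      fun _ _ => profileSum_anti hS _ _).exists_lower_of_finite hX hsep
      fun _ => profileLevel_anti hS _
  refine ⟨W', g' ∘ cls, hWW', fun i => (hg' (cls i)).trans
    (h.eqOn_of_profile_eqOn ((hrep i).mono (Finset.coe_subset.2 hS))).symm, ?_⟩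
  have hlevel : (fun i => profileLevel m S' (σ i)) = fun i => profileLevel m S' (σ (rep (cls i))) :=
    funext fun i => profileLevel_congr (hrep i)
  rw [hlevel]
  exact h'.comap cls (fun i j => (profileDist_congr (hrep i) (hrep j)).ge)
    fun i j => (profileSum_congr (hrep i) (hrep j)).le

open Function in
/-- The new point `p` is given the distance `σ i b` to the point of index `i`, so `p`
takes the place of the base point `b`. -/
theorem insert_point [DecidableEq X] (h : IsCoherentFamily m Γ S σ W g lev) {p : X} (hp : p ∉ W)
    {b : β} (hb : b ∈ S) (hσ : ∀ i, σ i b ≤ m) (hlev : ∀ i, lev i ≤ σ i b)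
    (hg : ∀ i, ∀ a ∈ W, g i a ≤ natDist p a + σ i b)
    (hpg : ∀ i, ∀ a ∈ W, natDist p a ≤ g i a + σ i b)
    (hσg : ∀ i, ∀ a ∈ W, σ i b ≤ g i a + natDist p a) :
    IsCoherentFamily m Γ S σ (insert p W) (fun i => update (g i) p (σ i b)) lev := by
  have hne : ∀ i, ∀ a ∈ W, update (g i) p (σ i b) a = g i a := fun i a ha =>
    update_of_ne (ne_of_mem_of_not_mem ha hp) _ _
  have hkat : ∀ i, IsKatetov (lev i) m (insert p W) (update (g i) p (σ i b)) := fun i =>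
    (h.katetov i).update_insert hp (hlev i) (hσ i) (hg i) (hσg i) (hpg i)
  refine ⟨h.one_le_level, h.level_le, hkat, fun i j => ?_, fun i j => ?_, fun i => ?_⟩
  · rw [Finset.forall_mem_insert, update_self, update_self]
    refine ⟨apply_le_add_profileDist hb _ _, fun a ha => ?_⟩
    rw [hne i a ha, hne j a ha]
    exact h.le_add_profileDist i j a ha
  · rw [Finset.forall_mem_insert, update_self, update_self]
    refine ⟨profileSum_le_add hb _ _, fun a ha => ?_⟩
    rw [hne i a ha, hne j a ha]
    exact h.profileSum_le_apply_add i j a ha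
  · exact (h.large i).of_ext (h.one_le_level i) ⟨Finset.subset_insert p W, hne i, hkat i⟩

end IsCoherentFamily

end CoherentFamily

/-! ### Embedding countable spaces -/

open Function in
theorem exists_eqOn_of_forall_exists_update {X Y : Type*} [DecidableEq Y] [Countable Y]
    {P : Finset Y → (Y → X) → Prop} {v₀ : Y → X} (h₀ : P ∅ v₀)
    (hP : ∀ S v, P S v → ∀ y ∉ S, ∃ x, P (insert y S) (update v y x)) :
    ∃ e : Y → X, ∀ T : Finset Y, ∃ S v, P S v ∧ T ⊆ S ∧ Set.EqOn e v S := by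
  let Q := {q : Finset Y × (Y → X) // P q.1 q.2}
  let : Preorder Q :=
    { le q r := q.1.1 ⊆ r.1.1 ∧ Set.EqOn q.1.2 r.1.2 q.1.1
      le_refl q := ⟨subset_rfl, Set.eqOn_refl _ _⟩
      le_trans q r t hqr hrt := ⟨hqr.1.trans hrt.1,
        hqr.2.trans (hrt.2.mono (Finset.coe_subset.2 hqr.1))⟩ }
  have hcofinal (T : Finset Y) : IsCofinal {q : Q | T ⊆ q.1.1} := fun q => by
    induction T using Finset.induction_on with
    | empty => exact ⟨q, Finset.empty_subset _, le_rfl⟩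
    | insert y T _ ih =>
      obtain ⟨r, hTr, hqr⟩ := ih
      by_cases hy : y ∈ r.1.1
      · exact ⟨r, Finset.insert_subset hy hTr, hqr⟩
      obtain ⟨x, hx⟩ := hP r.1.1 r.1.2 r.2 y hy
      refine ⟨⟨(_, _), hx⟩, Finset.insert_subset_insert y hTr, hqr.trans
        ⟨Finset.subset_insert y _, fun z hz => ?_⟩⟩
      exact (update_of_ne (ne_of_mem_of_not_mem hz hy) _ _).symm
  let := Encodable.ofCountable (Finset Y)
  let 𝒟 : Finset Y → Order.Cofinal Q := fun T => ⟨{q | T ⊆ q.1.1}, hcofinal T⟩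
  let I := Order.idealOfCofinals ⟨(∅, v₀), h₀⟩ 𝒟
  choose q hq hqI using Order.cofinal_meets_idealOfCofinals (⟨(∅, v₀), h₀⟩ : Q) 𝒟
  refine ⟨fun y => (q {y}).1.2 y, fun T => ⟨_, _, (q T).2, hq T, fun y hy => ?_⟩⟩
  obtain ⟨r, -, hyr, hTr⟩ := I.directed _ (hqI {y}) _ (hqI T)
  exact (hyr.2 (hq {y} (Finset.mem_singleton_self y))).trans (hTr.2 hy).symm

section Embedding

variable {m : ℕ} {X Y : Type*} [MetricSpace X] [MetricSpace Y] {Γ : Set X} {S : Finset Y}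

theorem HasIntegralDist.profileDist_natDist_le (hY : HasIntegralDist m Y) (S : Finset Y) (y z : Y) :
    profileDist S (natDist y) (natDist z) ≤ natDist y z := by
  refine profileDist_le_iff.2 fun b _ => ?_
  have := hY.natDist_triangle y z b
  have := hY.natDist_triangle z y b
  have := natDist_comm y z
  omega

theorem HasIntegralDist.natDist_le_profileSum (hY : HasIntegralDist m Y) (S : Finset Y) (y z : Y) :
    natDist y z ≤ profileSum m S (natDist y) (natDist z) := by
  refine Finset.le_fold_min _ |>.2 ⟨hY.natDist_le y z, fun b _ => ?_⟩
  rw [natDist_comm z b]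
  exact hY.natDist_triangle y b z

theorem HasIntegralDist.profileLevel_le_natDist (hY : HasIntegralDist m Y) {y b : Y} (hb : b ∈ S)
    (hyb : y ≠ b) : profileLevel m S (natDist y) ≤ natDist y b :=
  (profileLevel_le_max _ hb).trans (max_le (hY.one_le_natDist hyb) le_rfl)

/-- A finite stage in the construction of a copy of `Y` inside `Γ`: the points of `S` are placed by
`v`, and the distances to the points placed later are prescribed by the coherent family `g`. -/
structure IsApproximation (m : ℕ) (Γ : Set X) (S : Finset Y) (v : Y → X) (W : Finset X)
    (g : {y // y ∉ S} → X → ℕ) : Prop where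
  mem : ∀ y ∈ S, v y ∈ Γ
  mem_support : ∀ y ∈ S, v y ∈ W
  natDist_eq : ∀ y ∈ S, ∀ z ∈ S, natDist (v y) (v z) = natDist y z
  apply_eq : ∀ y, ∀ z ∈ S, g y (v z) = natDist y.1 z
  family : IsCoherentFamily m Γ S (fun y : {y // y ∉ S} => natDist y.1) W g
    fun y => profileLevel m S (natDist y.1)

theorem isApproximation_empty (hm : 1 ≤ m) {W : Finset X} {g : X → ℕ} (hg : IsKatetov m m W g)
    (hlarge : IsLarge m Γ m W g) (v : Y → X) :
    IsApproximation m Γ (∅ : Finset Y) v W fun _ => g where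
  mem := by simp
  mem_support := by simp
  natDist_eq := by simp
  apply_eq := by simp
  family := by
    simp only [profileLevel_empty hm]
    refine ⟨fun _ => hm, fun _ => le_rfl, fun _ => hg, fun _ _ _ _ => Nat.le_add_right _ _,
      fun _ _ a ha => ?_, fun _ => hlarge⟩
    exact (profileSum_le _ _ _ _).trans ((hg.le_apply ha).trans (Nat.le_add_right _ _))

open Function in
/-- The map `f` has to avoid `i₀`, whose level is at least `1`, while `u i₀` is at distance `0` from
itself. -/
theorem IsCoherentFamily.insert_realization [DecidableEq X] {ι ι' : Type*} {u : ι → Y}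
    {W : Finset X} {g : ι → X → ℕ} {lev : ι → ℕ} (hY : HasIntegralDist m Y)
    (h : IsCoherentFamily m Γ S (fun i => natDist (u i)) W g lev) {i₀ : ι} (hi₀ : u i₀ ∈ S) {p : X}
    (hpW : p ∉ W) (hp : Set.EqOn (natDist p) (g i₀) W) {f : ι' → ι}
    (hf : ∀ j, lev (f j) ≤ natDist (u (f j)) (u i₀)) :
    IsCoherentFamily m Γ S (fun j => natDist (u (f j))) (insert p W)
      (fun j => update (g (f j)) p (natDist (u (f j)) (u i₀))) (lev ∘ f) := by
  refine (h.comap f (fun _ _ => le_rfl) fun _ _ => le_rfl).insert_point hpW hi₀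
    (fun j => hY.natDist_le _ _) hf (fun j a ha => ?_) (fun j a ha => ?_) fun j a ha => ?_
  · rw [hp ha]
    exact (h.le_add_profileDist (f j) i₀ a ha).trans
      (Nat.add_le_add_left (hY.profileDist_natDist_le S _ _) _)
  · rw [hp ha, natDist_comm (u (f j))]
    exact (h.le_add_profileDist i₀ (f j) a ha).trans
      (Nat.add_le_add_left (hY.profileDist_natDist_le S _ _) _)
  · rw [hp ha]
    exact (hY.natDist_le_profileSum S _ _).trans (h.profileSum_le_apply_add (f j) i₀ a ha)

open Function in
theorem IsApproximation.exists_insert [DecidableEq Y] (hX : HasIntegralDist m X)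
    (hY : HasIntegralDist m Y) {v : Y → X} {W : Finset X} {g : {y // y ∉ S} → X → ℕ}
    (h : IsApproximation m Γ S v W g) {y₀ : Y} (hy₀ : y₀ ∉ S) :
    ∃ p W' g', IsApproximation m Γ (insert y₀ S) (update v y₀ p) W' g' := by
  classical
  obtain ⟨W', g', hWW', hg', h'⟩ :=
    h.family.exists_refine hX (fun _ _ => hY.natDist_le _ _) (Finset.subset_insert y₀ S)
  obtain ⟨p, hpΓ, hp⟩ := (h'.large ⟨y₀, hy₀⟩).exists_realization (h'.katetov ⟨y₀, hy₀⟩)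
  have hpW' : p ∉ W' := (h'.katetov ⟨y₀, hy₀⟩).notMem_of_eqOn (h'.one_le_level _) hp
  let f : {y // y ∉ insert y₀ S} → {y // y ∉ S} :=
    Subtype.map id fun y hy => mt Finset.mem_insert_of_mem hy
  have hv : ∀ y ∈ S, update v y₀ p y = v y := fun y hy =>
    update_of_ne (ne_of_mem_of_not_mem hy hy₀) _ _
  have hg'v : ∀ y, ∀ z ∈ S, g' y (v z) = natDist y.1 z := fun y z hz =>
    (hg' y (h.mem_support z hz)).trans (h.apply_eq y z hz)
  have hpv : ∀ z ∈ S, natDist p (v z) = natDist y₀ z := fun z hz =>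
    (hp (hWW' (h.mem_support z hz))).trans (hg'v _ z hz)
  refine ⟨p, insert p W', fun y => update (g' (f y)) p (natDist y.1 y₀), ?_, ?_, ?_, ?_, ?_⟩
  · simpa +contextual [hpΓ, hv] using h.mem
  · simpa +contextual [hv] using fun y hy => Or.inr (hWW' (h.mem_support y hy))
  · simp +contextual [hv, hpv, natDist_comm _ p, natDist_comm _ y₀, h.natDist_eq]
  · intro y z hz
    obtain rfl | hz := Finset.mem_insert.1 hz
    · simp
    · rw [hv z hz, update_of_ne (ne_of_mem_of_not_mem (hWW' (h.mem_support z hz)) hpW')]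
      exact hg'v (f y) z hz
  · exact h'.insert_realization hY (Finset.mem_insert_self y₀ S) hpW' hp (f := f) fun y =>
      hY.profileLevel_le_natDist (Finset.mem_insert_self y₀ S)
        (ne_of_mem_of_not_mem (Finset.mem_insert_self y₀ S) y.2).symm

theorem IsLarge.exists_isometry [Countable Y] (hm : 1 ≤ m) (hX : HasIntegralDist m X)
    (hY : HasIntegralDist m Y) {W : Finset X} {g : X → ℕ} (h : IsLarge m Γ m W g)
    (hg : IsKatetov m m W g) : ∃ e : Y → X, Isometry e ∧ ∀ y, e y ∈ Γ := by
  classical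
  obtain ⟨x, -⟩ := h.exists_realization hg
  obtain ⟨e, he⟩ := exists_eqOn_of_forall_exists_update
    (P := fun S v => ∃ W' g', IsApproximation m Γ (S : Finset Y) v W' g') (v₀ := fun _ => x)
    ⟨W, _, isApproximation_empty hm hg h _⟩
    fun S v ⟨W', g', hv⟩ y hy => hv.exists_insert hX hY hy
  refine ⟨e, hX.isometry_of_natDist_eq hY fun y z => ?_, fun y => ?_⟩
  · obtain ⟨S, v, ⟨W', g', hv⟩, hS, hev⟩ := he {y, z}
    obtain ⟨hy, hz⟩ : y ∈ S ∧ z ∈ S := by simpa [Finset.insert_subset_iff] using hS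
    rw [hev hy, hev hz, hv.natDist_eq y hy z hz]
  · obtain ⟨S, v, ⟨W', g', hv⟩, hS, hev⟩ := he {y}
    have hy : y ∈ S := Finset.singleton_subset_iff.1 hS
    rw [hev hy]
    exact hv.mem y hy

end Embedding

/-! ### Indivisibility -/

section Indivisible

universe u v

/-- The distance on `W` with a point `none` added, where `g` gives the distances to `none`. -/
def onePointDist {X : Type*} [MetricSpace X] (W : Finset X) (g : X → ℕ) : Option W → Option W → ℝ
  | none, none => 0
  | none, some a => g a
  | some a, none => g a
  | some a, some b => dist a b

/-- The one-point extension of `W` determined by a Katětov function without zeros. -/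
abbrev IsKatetov.onePointMetric {X : Type*} [MetricSpace X] {m : ℕ} {W : Finset X} {g : X → ℕ}
    (hX : HasIntegralDist m X) (hg : IsKatetov 1 m W g) : MetricSpace (Option W) where
  dist := onePointDist W g
  dist_self
    | none => rfl
    | some a => dist_self a
  dist_comm
    | none, none => rfl
    | none, some _ => rfl
    | some _, none => rfl
    | some a, some b => dist_comm a b
  dist_triangle
    | none, none, none => by simp [onePointDist]
    | none, none, some a => by simp [onePointDist]
    | none, some a, none => by simp only [onePointDist]; positivity
    | none, some a, some b => by
      have h := hg.apply_le_add b.2 a.2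
      simp only [onePointDist, Subtype.dist_eq, ← hX.cast_natDist, natDist_comm (a : X)]
      exact_mod_cast h
    | some a, none, none => by simp [onePointDist]
    | some a, none, some b => by
      have h := hg.natDist_le_add a.2 b.2
      simp only [onePointDist, Subtype.dist_eq, ← hX.cast_natDist]
      exact_mod_cast h
    | some a, some b, none => by
      have h := hg.apply_le_add a.2 b.2
      simp only [onePointDist, Subtype.dist_eq, ← hX.cast_natDist]
      exact_mod_cast h.trans_eq (add_comm _ _)
    | some a, some b, some c => dist_triangle a b c
  eq_of_dist_eq_zero := @fun
    | none, none, _ => rfl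
    | none, some a, h => absurd (hg.le_apply a.2) (by simpa [onePointDist] using h)
    | some a, none, h => absurd (hg.le_apply a.2) (by simpa [onePointDist] using h)
    | some _, some _, h => congrArg some (eq_of_dist_eq_zero h)

theorem IsKatetov.hasIntegralDist_onePointMetric {X : Type*} [MetricSpace X] {m : ℕ} {W : Finset X}
    {g : X → ℕ} (hX : HasIntegralDist m X) (hg : IsKatetov 1 m W g) :
    @HasIntegralDist m (Option W) (hg.onePointMetric hX) := by
  rintro (_ | a) (_ | b) hab
  · exact absurd rfl hab
  · exact ⟨g b, hg.le_apply b.2, hg.apply_le b.2, rfl⟩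
  · exact ⟨g a, hg.le_apply a.2, hg.apply_le a.2, rfl⟩
  · exact hX a b fun h => hab (congrArg some (Subtype.ext h))

theorem hasExtensionProperty_of_ultrahomogeneous {m : ℕ} {X : Type u} [MetricSpace X]
    (hX : HasIntegralDist m X)
    (hultra : ∀ (F : Finset X) (φ : X → X), (∀ x ∈ F, ∀ y ∈ F, dist (φ x) (φ y) = dist x y) →
      ∃ ψ : X ≃ᵢ X, ∀ x ∈ F, ψ x = φ x)
    (huniv : ∀ (Y : Type u) [MetricSpace Y] [Finite Y], HasIntegralDist m Y →
      ∃ e : Y → X, Isometry e) :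
    HasExtensionProperty m X := by
  classical
  intro W g hg
  by_cases h0 : ∃ a ∈ W, g a = 0
  · obtain ⟨a, ha, hga⟩ := h0
    refine ⟨a, fun b hb => ?_⟩
    have := hg.natDist_le_add ha hb
    have := hg.apply_le_add hb ha
    have := natDist_comm a b
    omega
  push Not at h0
  have hg₁ : IsKatetov 1 m W g :=
    { hg with le_apply := fun a ha => Nat.one_le_iff_ne_zero.2 (h0 a ha) }
  let := hg₁.onePointMetric hX
  obtain ⟨e, he⟩ := huniv (Option W) (hg₁.hasIntegralDist_onePointMetric hX)
  let j : W → X := fun a => e (some a)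
  have hj : Function.Injective j := he.injective.comp (Option.some_injective W)
  let φ : X → X := Function.extend j Subtype.val id
  have hφ : ∀ a, φ (j a) = a := hj.extend_apply _ _
  obtain ⟨ψ, hψ⟩ := hultra (Finset.univ.image j) φ <| by
    simp only [Finset.forall_mem_image, Finset.mem_univ, hφ, forall_const]
    exact fun a b => (he.dist_eq (some a) (some b)).symm
  refine ⟨ψ (e none), fun a ha => natDist_eq_of_dist_eq ?_⟩
  have hψa : ψ (j ⟨a, ha⟩) = a :=
    (hψ _ (Finset.mem_image_of_mem j (Finset.mem_univ _))).trans (hφ _)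
  rw [← hψa, ψ.dist_eq, he.dist_eq, hψa]
  rfl

theorem Um_indivisible_general {m : ℕ} (hm : 1 ≤ m) {X : Type u} [MetricSpace X]
    (hX : HasIntegralDist m X) (hext : HasExtensionProperty m X) {κ : Type*} [Finite κ]
    (c : X → κ) :
    ∃ i, ∀ (Y : Type v) [MetricSpace Y] [Countable Y], HasIntegralDist m Y →
      ∃ e : Y → X, Isometry e ∧ ∀ y, c (e y) = i := by
  have := Fintype.ofFinite κ
  have hg : IsKatetov m m ∅ (fun _ : X => m) := isKatetov_empty m m _
  have hlarge : IsLarge m (c ⁻¹' (Finset.univ : Finset κ)) m ∅ fun _ => m := by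
    rw [Finset.coe_univ, Set.preimage_univ]
    exact hext.isLarge_univ hg
  obtain ⟨i, -, W, g, hWg, hi⟩ := hlarge.exists_ext_of_coloring hg
  exact ⟨i, fun Y _ _ hY => hi.exists_isometry hm hX hY hWg.katetov⟩

end Indivisible

/-- The space `U_m` (the countable ultrahomogeneous metric space with distances in
`{1,…,m}`, universal for countable metric spaces with distances in `{1,…,m}`) is
indivisible: for every finite partition, one piece contains an isometric copy
of the whole space. -/
theorem Um_indivisible (m : ℕ) (hm : 1 ≤ m)
    (X : Type) [MetricSpace X] [Countable X]
    (hdist : ∀ x y : X, x ≠ y → ∃ k : ℕ, 1 ≤ k ∧ k ≤ m ∧ dist x y = k)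
    (hultra : ∀ (F : Finset X) (φ : X → X),
      (∀ x ∈ F, ∀ y ∈ F, dist (φ x) (φ y) = dist x y) →
      ∃ ψ : X ≃ᵢ X, ∀ x ∈ F, ψ x = φ x)
    (huniv : ∀ (Y : Type) [MetricSpace Y] [Countable Y],
      (∀ x y : Y, x ≠ y → ∃ k : ℕ, 1 ≤ k ∧ k ≤ m ∧ dist x y = k) →
      ∃ e : Y → X, Isometry e) :
    ∀ (k : ℕ) (c : X → Fin k), ∃ (i : Fin k) (e : X → X),
      Isometry e ∧ ∀ x, c (e x) = i := by
  intro k c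
  have hext : HasExtensionProperty m X :=
    hasExtensionProperty_of_ultrahomogeneous hdist hultra fun Y _ _ => huniv Y
  obtain ⟨i, hi⟩ := Um_indivisible_general hm hdist hext c
  exact ⟨i, hi X hdist⟩
end

section
/- If m ≥ 1 and the discretized Urysohn sphere S_m = (U_m, d/m) is indivisible, then the Urysohn sphere S is 1/m-indivisible: for every finite partition of S there is a piece Γ such that the 1/m-neighborhood (Γ)_{1/m} contains an isometric copy of S. -/
/-!
The rounding `⌈m d⌉ / (m + 1)` of a metric `d ≤ 1` takes values in `{0, …, m} / (m + 1)` and differs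
from `d` by at most `ε = 1 / (m + 1)`, which is strictly less than `1 / m`.

Fix a dense sequence `x` in `S`. The finite sequences in `U_m` whose mutual distances, divided by
`m + 1`, are within `ε` of those of an initial segment of `x` form a tree. Every branch of the tree
carries a copy of `x`, and branches share only their common initial segments, so all these copies
can be glued to the *set* `U_m`, the last term of each finite sequence lying within `ε` of the node
it determines, without shortening distances along a branch. The glued space is countable and hence
embeds in `S`. This gives a map `A : U_m → S` such that every isometric copy of `U_m` in `U_m` (it
contains a rounding of `x`, hence a branch) has an image that is `ε`-close to a copy of `x`. A
colouring of `S` is pulled back along `A` and indivisibility of `U_m` is applied.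
-/

open Set Filter Topology
open scoped NNReal

universe u

/-- All distances between distinct points lie in `{1, …, m}`. -/
def HasIntegerDistances (m : ℕ) (X : Type*) [MetricSpace X] : Prop :=
  ∀ x y : X, x ≠ y → ∃ k : ℕ, 1 ≤ k ∧ k ≤ m ∧ dist x y = k

/-- Universality of `U_m`: every countable metric space with distances in `{1, …, m}` embeds. -/
def IsUniversalIntegerSpace (m : ℕ) (U : Type u) [MetricSpace U] : Prop :=
  ∀ (Y : Type u) [MetricSpace Y] [Countable Y], HasIntegerDistances m Y → ∃ e : Y → U, Isometry e

/-- Universality of the Urysohn sphere: every separable metric space of diameter at most `1`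
embeds. -/
def IsUniversalSphere (S : Type u) [MetricSpace S] : Prop :=
  ∀ (Y : Type u) [MetricSpace Y] [TopologicalSpace.SeparableSpace Y],
    (∀ x y : Y, dist x y ≤ 1) → ∃ e : Y → S, Isometry e

/-- A metric space is indivisible if every finite colouring, i.e. partition into finitely many
possibly empty pieces, has a monochromatic isometric copy of the whole space. -/
def IsIndivisible (X : Type*) [MetricSpace X] : Prop :=
  ∀ (k : ℕ) (c : X → Fin k), ∃ (i : Fin k) (e : X → X), Isometry e ∧ ∀ x, c (e x) = i

/-- A metric space is `ε`-indivisible if every finite colouring has a colour class whose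
`ε`-neighbourhood contains an isometric copy of the whole space. -/
def IsEpsIndivisible (ε : ℝ) (X : Type*) [MetricSpace X] : Prop :=
  ∀ (k : ℕ) (c : X → Fin k), ∃ (i : Fin k) (e : X → X), Isometry e ∧
    ∀ x, ∃ y, c y = i ∧ dist (e x) y ≤ ε

section Rounding

/-- The metric `⌈κ d⌉` obtained by rescaling a metric `d` and rounding up to integers. -/
noncomputable abbrev ceilMetricSpace {κ : ℝ} (hκ : 0 < κ) (X : Type*) [MetricSpace X] :
    MetricSpace X where
  dist x y := ⌈κ * dist x y⌉₊
  dist_self x := by simp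
  dist_comm x y := by rw [dist_comm]
  dist_triangle x y z := by
    have hscaled : κ * dist x z ≤ κ * dist x y + κ * dist y z := by
      rw [← mul_add]
      exact mul_le_mul_of_nonneg_left (dist_triangle x y z) hκ.le
    exact_mod_cast (Nat.ceil_mono hscaled).trans (Nat.ceil_add_le _ _)
  eq_of_dist_eq_zero {x y} h := by
    have hle : κ * dist x y ≤ 0 := Nat.ceil_eq_zero.1 (by exact_mod_cast h)
    exact dist_le_zero.1 (nonpos_of_mul_nonpos_right hle hκ)

theorem IsUniversalIntegerSpace.exists_dist_eq_ceil {m : ℕ} (hm : 0 < m) {U : Type u}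
    [MetricSpace U] (hU : IsUniversalIntegerSpace m U) {Y : Type u} [MetricSpace Y] [Countable Y]
    (hY : ∀ x y : Y, dist x y ≤ 1) :
    ∃ e : Y → U, ∀ x y, dist (e x) (e y) = ⌈m * dist x y⌉₊ := by
  have hm' : (0 : ℝ) < m := by exact_mod_cast hm
  have hdist : @HasIntegerDistances m Y (ceilMetricSpace hm' Y) := fun x y hxy =>
    ⟨_, Nat.ceil_pos.2 (mul_pos hm' (dist_pos.2 hxy)),
      Nat.ceil_le.2 (mul_le_of_le_one_right hm'.le (hY x y)), rfl⟩
  obtain ⟨e, he⟩ := @hU Y (ceilMetricSpace hm' Y) _ hdist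
  exact ⟨e, (@isometry_iff_dist_eq _ _ (ceilMetricSpace hm' Y).toPseudoMetricSpace _ e).1 he⟩

theorem abs_ceil_mul_div_sub_le (m : ℕ) {d : ℝ} (hd₀ : 0 ≤ d) (hd₁ : d ≤ 1) :
    |(⌈m * d⌉₊ : ℝ) / (m + 1) - d| ≤ 1 / (m + 1) := by
  have hlower : m * d ≤ ⌈m * d⌉₊ := Nat.le_ceil _
  have hupper : (⌈m * d⌉₊ : ℝ) < m * d + 1 := Nat.ceil_lt_add_one (by positivity)
  have hpos : (0 : ℝ) < m + 1 := by positivity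
  rw [div_sub' hpos.ne', abs_div, abs_of_pos hpos]
  gcongr
  rw [abs_le]
  constructor <;> linarith

/-- The pseudometric `c d` obtained by rescaling a pseudometric `d`. -/
abbrev rescaledPseudoMetricSpace (c : ℝ≥0) (X : Type*) [PseudoMetricSpace X] :
    PseudoMetricSpace X where
  dist x y := c * dist x y
  dist_self x := by simp
  dist_comm x y := by rw [dist_comm]
  dist_triangle x y z := by
    rw [← mul_add]
    exact mul_le_mul_of_nonneg_left (dist_triangle x y z) c.2

theorem HasIntegerDistances.dist_le {m : ℕ} {U : Type*} [MetricSpace U]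
    (hU : HasIntegerDistances m U) (a b : U) : dist a b ≤ m := by
  rcases eq_or_ne a b with rfl | hab
  · simp
  · obtain ⟨k, -, hkm, hk⟩ := hU a b hab
    rw [hk]
    exact_mod_cast hkm

end Rounding

section Universality

theorem IsUniversalSphere.nonempty {S : Type u} [MetricSpace S] (hS : IsUniversalSphere S) :
    Nonempty S :=
  let ⟨e, _⟩ := hS PUnit (by simp)
  ⟨e PUnit.unit⟩

theorem IsUniversalSphere.exists_dist_le_iff {S : Type u} [MetricSpace S]
    (hS : IsUniversalSphere S) {Z : Type*} [Countable Z] {ι : Type u} (Φ : Z → ι → ℝ)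
    (hΦ : ∀ z i, Φ z i ∈ Icc 0 1) :
    ∃ j : Z → S, ∀ z w C, 0 ≤ C → (dist (j z) (j w) ≤ C ↔ ∀ i, |Φ z i - Φ w i| ≤ C) := by
  let : TopologicalSpace ι := ⊥
  have : DiscreteTopology ι := ⟨rfl⟩
  let Ψ (z : Z) : BoundedContinuousFunction ι ℝ :=
    .mkOfDiscrete (Φ z) 1 fun i j => Real.dist_le_of_mem_Icc_01 (hΦ z i) (hΦ z j)
  have : Countable (range Ψ) := (countable_range Ψ).to_subtype
  have hdiam : ∀ f g : range Ψ, dist f g ≤ 1 := by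
    rintro ⟨_, z, rfl⟩ ⟨_, w, rfl⟩
    exact (BoundedContinuousFunction.dist_le zero_le_one).2 fun i =>
      Real.dist_le_of_mem_Icc_01 (hΦ z i) (hΦ w i)
  obtain ⟨e, he⟩ := hS (range Ψ) hdiam
  refine ⟨fun z => e ⟨Ψ z, mem_range_self z⟩, fun z w C hC => ?_⟩
  rw [he.dist_eq]
  exact BoundedContinuousFunction.dist_le hC

theorem exists_isometry_extension_of_denseRange {ι P S : Type*} [PseudoMetricSpace P]
    [MetricSpace S] [CompleteSpace S] {x : ι → P} (hx : DenseRange x) {b : ι → S}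
    (hb : ∀ i j, dist (b i) (b j) = dist (x i) (x j)) :
    ∃ F : P → S, Isometry F ∧ ∀ i, F (x i) = b i := by
  let : PseudoMetricSpace ι := .induced x ‹_›
  have hx_isom : Isometry x := .of_dist_eq fun _ _ => rfl
  have hb_isom : Isometry b := .of_dist_eq hb
  have hx_dense : IsDenseInducing x := ⟨hx_isom.isUniformInducing.isInducing, hx⟩
  have hF_cont : Continuous (hx_dense.extend b) :=
    (uniformContinuous_uniformly_extend hx_isom.isUniformInducing hx
      hb_isom.uniformContinuous).continuous
  have hF_ext (i : ι) : hx_dense.extend b (x i) = b i :=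
    hx_dense.extend_eq hb_isom.continuous i
  refine ⟨hx_dense.extend b, .of_dist_eq fun y z => ?_, hF_ext⟩
  refine hx.induction_on₂ (p := fun y z => dist (hx_dense.extend b y) (hx_dense.extend b z) =
    dist y z) (isClosed_eq (by fun_prop) (by fun_prop)) (fun i j => ?_) y z
  rw [hF_ext, hF_ext, hb]

end Universality

section Gluing

variable {T U : Type*} [PseudoMetricSpace T] [PseudoMetricSpace U]

/-- The distance from a point `t` of `T` to a point `a` of `U` when each `z : T` is joined to
`α z : U` by an edge of length `ε`. -/
noncomputable def crossDist (α : T → U) (ε : ℝ) (t : T) (a : U) : ℝ :=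
  ⨅ z, dist t z + ε + dist (α z) a

/-- The distance between two points of `T` when each `z : T` is joined to `α z : U` by an edge of
length `ε` and paths may take a shortcut through a point `a` of `U`. -/
noncomputable def shortcutDist (α : T → U) (ε : ℝ) (s t : T) : ℝ :=
  min (dist s t) (⨅ a, crossDist α ε s a + crossDist α ε t a)

variable {α : T → U} {ε : ℝ}

theorem crossDist_le (hε : 0 ≤ ε) (t z : T) (a : U) :
    crossDist α ε t a ≤ dist t z + ε + dist (α z) a :=
  ciInf_le (f := fun z => dist t z + ε + dist (α z) a)
    ⟨0, forall_mem_range.2 fun _ => by positivity⟩ z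

theorem le_crossDist {t : T} {a : U} {r : ℝ} (h : ∀ z, r ≤ dist t z + ε + dist (α z) a) :
    r ≤ crossDist α ε t a :=
  haveI : Nonempty T := ⟨t⟩
  le_ciInf h

theorem crossDist_nonneg (hε : 0 ≤ ε) (t : T) (a : U) : 0 ≤ crossDist α ε t a :=
  le_crossDist fun _ => by positivity

theorem crossDist_le_dist_add (hε : 0 ≤ ε) (s t : T) (a : U) :
    crossDist α ε s a ≤ dist s t + crossDist α ε t a := by
  rw [← sub_le_iff_le_add']
  refine le_crossDist fun z => ?_
  linarith [crossDist_le (α := α) hε s z a, dist_triangle s t z]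

theorem crossDist_le_add_dist (hε : 0 ≤ ε) (t : T) (a b : U) :
    crossDist α ε t b ≤ crossDist α ε t a + dist a b := by
  rw [← sub_le_iff_le_add]
  refine le_crossDist fun z => ?_
  linarith [crossDist_le (α := α) hε t z b, dist_triangle (α z) a b]

theorem crossDist_map_le (hε : 0 ≤ ε) (s t : T) : crossDist α ε s (α t) ≤ dist s t + ε := by
  simpa using crossDist_le (α := α) hε s t (α t)

theorem dist_map_le_crossDist_add
    (hα : ∀ s t, dist (α s) (α t) ≤ dist s t + 2 * ε) (t : T) (a : U) :
    dist (α t) a ≤ crossDist α ε t a + ε := by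
  rw [← sub_le_iff_le_add]
  refine le_crossDist fun z => ?_
  linarith [hα t z, dist_triangle (α t) (α z) a]

theorem shortcutDist_le_dist (s t : T) : shortcutDist α ε s t ≤ dist s t :=
  min_le_left _ _

theorem shortcutDist_le_crossDist_add (hε : 0 ≤ ε) (s t : T) (a : U) :
    shortcutDist α ε s t ≤ crossDist α ε s a + crossDist α ε t a :=
  (min_le_right _ _).trans <| ciInf_le (f := fun a => crossDist α ε s a + crossDist α ε t a)
    ⟨0, forall_mem_range.2 fun a =>
      add_nonneg (crossDist_nonneg hε s a) (crossDist_nonneg hε t a)⟩ a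

theorem le_shortcutDist {s t : T} {r : ℝ} (hdist : r ≤ dist s t)
    (hcross : ∀ a, r ≤ crossDist α ε s a + crossDist α ε t a) : r ≤ shortcutDist α ε s t :=
  haveI : Nonempty U := ⟨α s⟩
  le_min hdist (le_ciInf hcross)

theorem shortcutDist_nonneg (hε : 0 ≤ ε) (s t : T) : 0 ≤ shortcutDist α ε s t :=
  le_shortcutDist dist_nonneg fun a =>
    add_nonneg (crossDist_nonneg hε s a) (crossDist_nonneg hε t a)

theorem shortcutDist_self (hε : 0 ≤ ε) (t : T) : shortcutDist α ε t t = 0 :=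
  le_antisymm ((shortcutDist_le_dist t t).trans_eq (dist_self t)) (shortcutDist_nonneg hε t t)

theorem shortcutDist_le_add_dist (hε : 0 ≤ ε) (r s t : T) :
    shortcutDist α ε r t ≤ shortcutDist α ε r s + dist s t := by
  rw [← sub_le_iff_le_add]
  refine le_shortcutDist ?_ fun a => ?_
  · linarith [shortcutDist_le_dist (α := α) (ε := ε) r t, dist_triangle r s t]
  · linarith [shortcutDist_le_crossDist_add (α := α) hε r t a,
      crossDist_le_dist_add (α := α) hε t s a, dist_comm s t]

theorem abs_shortcutDist_sub_le (hε : 0 ≤ ε) (r s t : T) :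
    |shortcutDist α ε r s - shortcutDist α ε r t| ≤ dist s t := by
  rw [abs_sub_le_iff]
  constructor <;>
    linarith [shortcutDist_le_add_dist (α := α) hε r s t,
      shortcutDist_le_add_dist (α := α) hε r t s, dist_comm s t]

theorem abs_shortcutDist_sub_crossDist_le (hε : 0 ≤ ε)
    (hα : ∀ s t, dist (α s) (α t) ≤ dist s t + 2 * ε) (s t : T) :
    |shortcutDist α ε s t - crossDist α ε s (α t)| ≤ ε := by
  rw [abs_sub_le_iff]
  constructor
  · linarith [shortcutDist_le_crossDist_add (α := α) hε s t (α t),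
      crossDist_map_le (α := α) hε t t, dist_self t]
  · suffices crossDist α ε s (α t) - ε ≤ shortcutDist α ε s t by linarith
    refine le_shortcutDist ?_ fun a => ?_
    · linarith [crossDist_map_le (α := α) hε s t]
    · linarith [crossDist_le_add_dist (α := α) hε s a (α t), dist_comm a (α t),
        dist_map_le_crossDist_add hα t a]

theorem le_crossDist_add_crossDist {s t : T} {r : ℝ}
    (h : ∀ z w, r ≤ dist s z + dist (α z) (α w) + dist w t + 2 * ε) (a : U) :
    r ≤ crossDist α ε s a + crossDist α ε t a := by
  rw [← sub_le_iff_le_add]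
  refine le_crossDist fun z => ?_
  rw [sub_le_comm]
  refine le_crossDist fun w => ?_
  linarith [h z w, dist_triangle_right (α z) (α w) a, dist_comm t w]

end Gluing

theorem IsUniversalSphere.exists_gluing {S : Type u} [MetricSpace S] (hS : IsUniversalSphere S)
    {T : Type u} {U : Type*} [PseudoMetricSpace T] [Countable T] [PseudoMetricSpace U] [Countable U]
    (hT : ∀ s t : T, dist s t ≤ 1) {ε : ℝ} (hε : 0 ≤ ε) {α : T → U}
    (hα : ∀ s t, dist (α s) (α t) ≤ dist s t + 2 * ε) :
    ∃ (A : U → S) (B : T → S), (∀ s t, dist (B s) (B t) ≤ dist s t) ∧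
      (∀ t, dist (B t) (A (α t)) ≤ ε) ∧
      ∀ s t r, r ≤ dist s t → (∀ z w, r ≤ dist s z + dist (α z) (α w) + dist w t + 2 * ε) →
        r ≤ dist (B s) (B t) := by
  have hshort (s t : T) : shortcutDist α ε s t ≤ 1 := (shortcutDist_le_dist s t).trans (hT s t)
  obtain ⟨j, hj⟩ := hS.exists_dist_le_iff
    (Sum.elim (fun a s => min 1 (crossDist α ε s a)) fun t s => shortcutDist α ε s t) <| by
      rintro (a | t) s
      · exact ⟨le_min zero_le_one (crossDist_nonneg hε s a), min_le_left _ _⟩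
      · exact ⟨shortcutDist_nonneg hε s t, hshort s t⟩
  refine ⟨j ∘ Sum.inl, j ∘ Sum.inr, fun s t => ?_, fun t => ?_, fun s t r hdist hcross => ?_⟩
  · exact (hj _ _ _ dist_nonneg).2 fun r => abs_shortcutDist_sub_le hε r s t
  · refine (hj _ _ _ hε).2 fun s => ?_
    calc |shortcutDist α ε s t - min 1 (crossDist α ε s (α t))|
      _ = |min 1 (shortcutDist α ε s t) - min 1 (crossDist α ε s (α t))| := by
        rw [min_eq_right (hshort s t)]
      _ ≤ |shortcutDist α ε s t - crossDist α ε s (α t)| := by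
        simpa using abs_min_sub_min_le_max 1 (shortcutDist α ε s t) 1 (crossDist α ε s (α t))
      _ ≤ ε := abs_shortcutDist_sub_crossDist_le hε hα s t
  · have hle := (hj (.inr s) (.inr t) _ dist_nonneg).1 le_rfl s
    simp only [Sum.elim_inr, shortcutDist_self hε, zero_sub, abs_neg] at hle
    exact (le_shortcutDist hdist (le_crossDist_add_crossDist hcross)).trans
      ((le_abs_self _).trans hle)

section Tree

variable {T P U : Type*} [Preorder T] [PseudoMetricSpace P] [PseudoMetricSpace U]

/-- The distance between two nodes of a tree labelled by points of a metric space, along the path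
through a common predecessor. It is cut off at `1`, so that nodes without a common predecessor are
at distance `1`. -/
noncomputable def treeDist (p : T → P) (s t : T) : ℝ :=
  sInf (insert 1 {d | ∃ r ≤ s, r ≤ t ∧ dist (p s) (p r) + dist (p r) (p t) = d})

variable {p : T → P}

theorem le_treeDist {s t : T} {b : ℝ} (hb : b ≤ 1)
    (h : ∀ r ≤ s, r ≤ t → b ≤ dist (p s) (p r) + dist (p r) (p t)) : b ≤ treeDist p s t := by
  refine le_csInf (insert_nonempty _ _) (forall_mem_insert.2 ⟨hb, ?_⟩)
  rintro _ ⟨r, hrs, hrt, rfl⟩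
  exact h r hrs hrt

theorem bddBelow_treeDist (p : T → P) (s t : T) : BddBelow
    (insert 1 {d | ∃ r ≤ s, r ≤ t ∧ dist (p s) (p r) + dist (p r) (p t) = d}) := by
  refine ⟨0, forall_mem_insert.2 ⟨zero_le_one, ?_⟩⟩
  rintro _ ⟨r, -, -, rfl⟩
  positivity

theorem treeDist_le_one (s t : T) : treeDist p s t ≤ 1 :=
  csInf_le (bddBelow_treeDist p s t) (mem_insert _ _)

theorem treeDist_le {r s t : T} (hrs : r ≤ s) (hrt : r ≤ t) :
    treeDist p s t ≤ dist (p s) (p r) + dist (p r) (p t) :=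
  csInf_le (bddBelow_treeDist p s t) (mem_insert_of_mem _ ⟨r, hrs, hrt, rfl⟩)

theorem treeDist_nonneg (s t : T) : 0 ≤ treeDist p s t :=
  le_treeDist zero_le_one fun _ _ _ => by positivity

theorem treeDist_self (t : T) : treeDist p t t = 0 :=
  le_antisymm (by simpa using treeDist_le (p := p) (le_refl t) le_rfl) (treeDist_nonneg t t)

theorem treeDist_comm (s t : T) : treeDist p s t = treeDist p t s := by
  have hle (s t : T) : treeDist p s t ≤ treeDist p t s :=
    le_treeDist (treeDist_le_one s t) fun r hrt hrs => by
      linarith [treeDist_le (p := p) hrs hrt, dist_comm (p s) (p r), dist_comm (p r) (p t)]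
  exact le_antisymm (hle s t) (hle t s)

theorem dist_le_treeDist (hp : ∀ s t, dist (p s) (p t) ≤ 1) (s t : T) :
    dist (p s) (p t) ≤ treeDist p s t :=
  le_treeDist (hp s t) fun _ _ _ => dist_triangle _ _ _

theorem treeDist_triangle (hT : ∀ t : T, IsChain (· ≤ ·) (Iic t)) (s t v : T) :
    treeDist p s v ≤ treeDist p s t + treeDist p t v := by
  rw [← sub_le_iff_le_add]
  refine le_treeDist (by linarith [treeDist_le_one (p := p) s v, treeDist_nonneg (p := p) t v])
    fun r hrs hrt => ?_
  rw [sub_le_comm]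
  refine le_treeDist ?_ fun q hqt hqv => ?_
  · linarith [treeDist_le_one (p := p) s v, dist_nonneg (x := p s) (y := p r),
      dist_nonneg (x := p r) (y := p t)]
  · have htri := dist_triangle (p r) (p t) (p q)
    rcases (hT t).total hrt hqt with hrq | hqr
    · linarith [treeDist_le (p := p) hrs (hrq.trans hqv), dist_triangle (p r) (p q) (p v)]
    · linarith [treeDist_le (p := p) (hqr.trans hrs) hqv, dist_triangle (p s) (p r) (p q)]

/-- The nodes of a labelled tree with the distance `treeDist`. -/
noncomputable abbrev treePseudoMetricSpace (p : T → P) (hT : ∀ t : T, IsChain (· ≤ ·) (Iic t)) :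
    PseudoMetricSpace T where
  dist := treeDist p
  dist_self := treeDist_self
  dist_comm := treeDist_comm
  dist_triangle := treeDist_triangle hT

variable {α : T → U} {ε : ℝ}

theorem dist_map_le_treeDist_add (hU : ∀ a b : U, dist a b ≤ 1) (hε : 0 ≤ ε)
    (hα : ∀ s t, s ≤ t → |dist (α s) (α t) - dist (p s) (p t)| ≤ ε) (s t : T) :
    dist (α s) (α t) ≤ treeDist p s t + 2 * ε := by
  rw [← sub_le_iff_le_add]
  refine le_treeDist (by linarith [hU (α s) (α t)]) fun r hrs hrt => ?_
  linarith [dist_triangle_left (α s) (α t) (α r), (abs_sub_le_iff.1 (hα r s hrs)).1,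
    (abs_sub_le_iff.1 (hα r t hrt)).1, dist_comm (p s) (p r)]

theorem dist_le_dist_add_dist_map_add_dist
    (hα : ∀ s t, s ≤ t → |dist (α s) (α t) - dist (p s) (p t)| ≤ ε)
    {r q z w : T} (hrq : r ≤ q) (hrz : r ≤ z) (hqw : q ≤ w) :
    dist (p r) (p q) ≤ dist (p r) (p z) + dist (α z) (α w) + dist (p w) (p q) + 2 * ε :=
  calc dist (p r) (p q)
    _ ≤ dist (p r) (p w) + dist (p w) (p q) := dist_triangle _ _ _
    _ ≤ dist (α r) (α w) + ε + dist (p w) (p q) := by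
      linarith [(abs_sub_le_iff.1 (hα r w (hrq.trans hqw))).2]
    _ ≤ dist (α r) (α z) + dist (α z) (α w) + ε + dist (p w) (p q) := by
      linarith [dist_triangle (α r) (α z) (α w)]
    _ ≤ dist (p r) (p z) + dist (α z) (α w) + dist (p w) (p q) + 2 * ε := by
      linarith [(abs_sub_le_iff.1 (hα r z hrz)).1]

theorem dist_le_treeDist_add_dist_add_treeDist (hT : ∀ t : T, IsChain (· ≤ ·) (Iic t))
    (hp : ∀ s t, dist (p s) (p t) ≤ 1) (hε : 0 ≤ ε)
    (hα : ∀ s t, s ≤ t → |dist (α s) (α t) - dist (p s) (p t)| ≤ ε)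
    {s t : T} (hst : s ≤ t) (z w : T) :
    dist (p s) (p t) ≤ treeDist p s z + dist (α z) (α w) + treeDist p w t + 2 * ε := by
  have hpst := hp s t
  have hαzw : 0 ≤ dist (α z) (α w) := dist_nonneg
  suffices dist (p s) (p t) - dist (α z) (α w) - 2 * ε - treeDist p w t ≤ treeDist p s z by
    linarith
  refine le_treeDist (by linarith [treeDist_nonneg (p := p) w t]) fun r hrs hrz => ?_
  rw [sub_le_comm]
  refine le_treeDist ?_ fun q hqw hqt => ?_
  · linarith [dist_nonneg (x := p s) (y := p r), dist_nonneg (x := p r) (y := p z)]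
  have hrq : dist (p r) (p q) ≤
      dist (p r) (p z) + dist (α z) (α w) + dist (p w) (p q) + 2 * ε := by
    rcases (hT t).total (hrs.trans hst) hqt with hrq | hqr
    · exact dist_le_dist_add_dist_map_add_dist hα hrq hrz hqw
    · linarith [dist_le_dist_add_dist_map_add_dist hα hqr hqw hrz, dist_comm (p q) (p r),
        dist_comm (p q) (p w), dist_comm (p z) (p r), dist_comm (α w) (α z)]
  linarith [dist_triangle4 (p s) (p r) (p q) (p t)]

end Tree

theorem IsUniversalSphere.exists_tree_gluing {S : Type u} [MetricSpace S]
    (hS : IsUniversalSphere S) {T : Type u} {P U : Type*} [Preorder T] [Countable T]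
    [PseudoMetricSpace P] [PseudoMetricSpace U] [Countable U]
    (hT : ∀ t : T, IsChain (· ≤ ·) (Iic t)) {p : T → P} (hp : ∀ s t, dist (p s) (p t) ≤ 1)
    (hU : ∀ a b : U, dist a b ≤ 1) {ε : ℝ} (hε : 0 ≤ ε) {α : T → U}
    (hα : ∀ s t, s ≤ t → |dist (α s) (α t) - dist (p s) (p t)| ≤ ε) :
    ∃ (A : U → S) (B : T → S), (∀ s t, s ≤ t → dist (B s) (B t) = dist (p s) (p t)) ∧
      ∀ t, dist (B t) (A (α t)) ≤ ε := by
  let := treePseudoMetricSpace p hT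
  obtain ⟨A, B, hB_le, hBA, hB_ge⟩ :=
    hS.exists_gluing treeDist_le_one hε (dist_map_le_treeDist_add hU hε hα)
  refine ⟨A, B, fun s t hst => le_antisymm ?_ ?_, hBA⟩
  · exact (hB_le s t).trans ((treeDist_le le_rfl hst).trans_eq (by simp))
  · exact hB_ge s t _ (dist_le_treeDist hp s t)
      (dist_le_treeDist_add_dist_add_treeDist hT hp hε hα hst)

section ApproximationTree

variable {P U : Type*} [PseudoMetricSpace P] [PseudoMetricSpace U]

/-- The tree of finite approximations, up to `ε`, of a sequence `x` in `P` by points of `U`. A node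
is a nonempty list of pairs `(i, a)`, where `a : U` plays the role of `x i`. -/
def ApproxTree (U : Type*) [PseudoMetricSpace U] (x : ℕ → P) (ε : ℝ) : Type _ :=
  {l : List (ℕ × U) // l ≠ [] ∧
    ∀ a ∈ l, ∀ b ∈ l, |dist a.2 b.2 - dist (x a.1) (x b.1)| ≤ ε}

namespace ApproxTree

variable {x : ℕ → P} {ε : ℝ}

instance [Countable U] : Countable (ApproxTree U x ε) :=
  Subtype.countable

instance : Preorder (ApproxTree U x ε) where
  le s t := s.1 <+: t.1
  le_refl s := s.1.prefix_refl
  le_trans _ _ _ := List.IsPrefix.trans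

/-- The last pair of a node. -/
def last (t : ApproxTree U x ε) : ℕ × U :=
  t.1.getLast t.2.1

theorem isChain_Iic (t : ApproxTree U x ε) : IsChain (· ≤ ·) (Iic t) :=
  fun _ hr _ hs _ => List.prefix_or_prefix_of_prefix hr hs

theorem abs_dist_last_sub_le {s t : ApproxTree U x ε} (hst : s ≤ t) :
    |dist s.last.2 t.last.2 - dist (x s.last.1) (x t.last.1)| ≤ ε :=
  t.2.2 _ (List.IsPrefix.mem (List.getLast_mem s.2.1) hst) _ (List.getLast_mem t.2.1)

variable {a : ℕ → U} (ha : ∀ i j, |dist (a i) (a j) - dist (x i) (x j)| ≤ ε)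

/-- The branch of the tree given by a sequence approximating `x`. -/
def branch (n : ℕ) : ApproxTree U x ε :=
  ⟨(List.range (n + 1)).map fun i => (i, a i), by simp, by
    simp only [List.forall_mem_map]
    exact fun i _ j _ => ha i j⟩

theorem branch_mono : Monotone (branch ha) := fun n k hnk => by
  refine List.IsPrefix.map _ (List.prefix_iff_eq_take.2 ?_)
  rw [List.length_range, List.take_range, min_eq_left (by omega)]

theorem last_branch (n : ℕ) : (branch ha n).last = (n, a n) := by
  simp [last, branch, List.range_succ]

end ApproxTree

end ApproximationTree

theorem IsUniversalSphere.exists_map_forall_approx {S : Type u} [MetricSpace S]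
    (hS : IsUniversalSphere S) {P : Type*} {U : Type u} [PseudoMetricSpace P] [PseudoMetricSpace U]
    [Countable U] {x : ℕ → P} (hx : ∀ i j, dist (x i) (x j) ≤ 1) (hU : ∀ a b : U, dist a b ≤ 1)
    {ε : ℝ} (hε : 0 ≤ ε) :
    ∃ A : U → S, ∀ a : ℕ → U, (∀ i j, |dist (a i) (a j) - dist (x i) (x j)| ≤ ε) →
      ∃ b : ℕ → S, (∀ i j, dist (b i) (b j) = dist (x i) (x j)) ∧
        ∀ n, dist (b n) (A (a n)) ≤ ε := by
  obtain ⟨A, B, hB, hBA⟩ := hS.exists_tree_gluing (T := ApproxTree U x ε)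
    ApproxTree.isChain_Iic (p := fun t => x t.last.1) (fun _ _ => hx _ _) hU hε
    (α := fun t => t.last.2) fun _ _ => ApproxTree.abs_dist_last_sub_le
  refine ⟨A, fun a ha => ⟨fun n => B (.branch ha n), fun i j => ?_, fun n => ?_⟩⟩
  · wlog hij : i ≤ j generalizing i j
    · rw [dist_comm, dist_comm (x i), this j i (le_of_not_ge hij)]
    · simpa only [ApproxTree.last_branch] using hB _ _ (ApproxTree.branch_mono ha hij)
  · simpa only [ApproxTree.last_branch] using hBA (.branch ha n)

theorem IsUniversalSphere.exists_map_forall_isometry {m : ℕ} (hm : 0 < m) {ε : ℝ}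
    (hε : 1 / (m + 1) < ε) {U : Type u} [MetricSpace U] [Countable U]
    (hdistU : HasIntegerDistances m U) (hunivU : IsUniversalIntegerSpace m U) {S : Type u}
    [MetricSpace S] [CompleteSpace S] [TopologicalSpace.SeparableSpace S]
    (hdiam : ∀ x y : S, dist x y ≤ 1) (hS : IsUniversalSphere S) :
    ∃ A : U → S, ∀ e : U → U, Isometry e →
      ∃ F : S → S, Isometry F ∧ ∀ y, ∃ a, dist (F y) (A (e a)) ≤ ε := by
  have := hS.nonempty
  obtain ⟨x, hx⟩ := TopologicalSpace.exists_dense_seq S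
  let c : ℝ≥0 := ((m : ℝ≥0) + 1)⁻¹
  have hc (r : ℝ) : c * r = r / (m + 1) := by simp [c, div_eq_inv_mul]
  have hscaled (a b : U) : c * dist a b ≤ 1 := by
    rw [hc, div_le_one (by positivity)]
    linarith [hdistU.dist_le a b]
  obtain ⟨A, hA⟩ := @exists_map_forall_approx S _ hS S U _ (rescaledPseudoMetricSpace c U) _ x
    (fun _ _ => hdiam _ _) hscaled (1 / (m + 1)) (by positivity)
  have : Countable (range x) := (countable_range x).to_subtype
  obtain ⟨e₀, he₀⟩ := hunivU.exists_dist_eq_ceil hm (Y := range x) fun _ _ => hdiam _ _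
  refine ⟨A, fun e he => ?_⟩
  let a (n : ℕ) : U := e₀ ⟨x n, mem_range_self n⟩
  have ha (i j : ℕ) : |c * dist (e (a i)) (e (a j)) - dist (x i) (x j)| ≤ 1 / (m + 1) := by
    rw [hc, he.dist_eq, he₀]
    exact abs_ceil_mul_div_sub_le m dist_nonneg (hdiam _ _)
  obtain ⟨b, hb, hbA⟩ := hA (e ∘ a) ha
  obtain ⟨F, hF, hFx⟩ := exists_isometry_extension_of_denseRange hx hb
  refine ⟨F, hF, fun y => ?_⟩
  obtain ⟨n, hn⟩ := hx.exists_dist_lt y (sub_pos.2 hε)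
  refine ⟨a n, ?_⟩
  calc dist (F y) (A (e (a n)))
    _ ≤ dist (F y) (F (x n)) + dist (F (x n)) (A (e (a n))) := dist_triangle _ _ _
    _ ≤ (ε - 1 / (m + 1)) + 1 / (m + 1) := by
      rw [hF.dist_eq, hFx]
      exact add_le_add hn.le (hbA n)
    _ = ε := sub_add_cancel _ _

theorem Sm_indivisible_implies_S_eps_indivisible_general {m : ℕ} (hm : 0 < m) {ε : ℝ}
    (hε : 1 / (m + 1) < ε) {U : Type u} [MetricSpace U] [Countable U]
    (hdistU : HasIntegerDistances m U) (hunivU : IsUniversalIntegerSpace m U)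
    (hindiv : IsIndivisible U) {S : Type u} [MetricSpace S] [CompleteSpace S]
    [TopologicalSpace.SeparableSpace S] (hdiam : ∀ x y : S, dist x y ≤ 1)
    (hunivS : IsUniversalSphere S) : IsEpsIndivisible ε S := by
  intro k c
  obtain ⟨A, hA⟩ := hunivS.exists_map_forall_isometry hm hε hdistU hunivU hdiam
  obtain ⟨i, e, he, hi⟩ := hindiv k (c ∘ A)
  obtain ⟨F, hF, hFA⟩ := hA e he
  exact ⟨i, F, hF, fun y => let ⟨a, ha⟩ := hFA y; ⟨A (e a), hi a, ha⟩⟩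

/-- If `m ≥ 1` and the discretized Urysohn sphere `S_m = (U_m, d/m)` is indivisible,
then the Urysohn sphere `S` is `1/m`-indivisible: for every finite partition of `S`
there is a piece `Γ` such that `(Γ)_{1/m}` contains an isometric copy of `S`. -/
theorem Sm_indivisible_implies_S_eps_indivisible (m : ℕ) (hm : 1 ≤ m)
    (Um : Type) [MetricSpace Um] [Countable Um]
    (hdistUm : ∀ x y : Um, x ≠ y → ∃ k : ℕ, 1 ≤ k ∧ k ≤ m ∧ dist x y = k)
    (hultraUm : ∀ (F : Finset Um) (φ : Um → Um),
      (∀ x ∈ F, ∀ y ∈ F, dist (φ x) (φ y) = dist x y) →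
      ∃ ψ : Um ≃ᵢ Um, ∀ x ∈ F, ψ x = φ x)
    (hunivUm : ∀ (Y : Type) [MetricSpace Y] [Countable Y],
      (∀ x y : Y, x ≠ y → ∃ k : ℕ, 1 ≤ k ∧ k ≤ m ∧ dist x y = k) →
      ∃ e : Y → Um, Isometry e)
    -- indivisibility of S_m = (U_m, d/m); isometric copies of S_m are exactly
    -- the maps multiplying the rescaled distance `d/m` (equivalently `d`) by 1
    (hindiv : ∀ (k : ℕ) (c : Um → Fin k), ∃ (i : Fin k) (e : Um → Um),
      (∀ x y : Um, dist (e x) (e y) / m = dist x y / m) ∧ ∀ x, c (e x) = i)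
    (S : Type) [MetricSpace S] [CompleteSpace S] [TopologicalSpace.SeparableSpace S]
    (hdiam : ∀ x y : S, dist x y ≤ 1)
    (hultraS : ∀ (F : Finset S) (φ : S → S),
      (∀ x ∈ F, ∀ y ∈ F, dist (φ x) (φ y) = dist x y) →
      ∃ ψ : S ≃ᵢ S, ∀ x ∈ F, ψ x = φ x)
    (hunivS : ∀ (Y : Type) [MetricSpace Y] [TopologicalSpace.SeparableSpace Y],
      (∀ x y : Y, dist x y ≤ 1) → ∃ e : Y → S, Isometry e) :
    ∀ (k : ℕ) (c : S → Fin k), ∃ (i : Fin k) (e : S → S), Isometry e ∧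
      ∀ x : S, ∃ y : S, c y = i ∧ dist (e x) y ≤ 1 / m := by
  have hm₀ : (0 : ℝ) < m := by exact_mod_cast hm
  have hindiv' : IsIndivisible Um := fun k c =>
    let ⟨i, e, he, hi⟩ := hindiv k c
    ⟨i, e, .of_dist_eq fun x y => (div_left_inj' hm₀.ne').1 (he x y), hi⟩
  exact Sm_indivisible_implies_S_eps_indivisible_general hm
    (one_div_lt_one_div_of_lt hm₀ (lt_add_one _)) hdistUm hunivUm hindiv' hdiam hunivS
end
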